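/- arXiv:math/0508172 — 4 statements merged into one kernel-verified Lean document; each statement's English description precedes it below -/
import Mathlib

section
/- Let X be a Peano continuum without cut points which admits no essential map to the circle. Let a group G act on X by homeomorphisms and let 𝓐 be a G-invariant collection of connected closed subsets of X such that: (i) 𝓐 is null; (ii) 𝓐 is fine; (iii) for each A ∈ 𝓐 the stabilizer st(A) = {g ∈ G : g(A) = A} acts as a convergence group on A. Then G acts as a convergence group on X. -/
open Set Filter Topology Pointwise

/-- The set `E` separates the points `x` and `y`: both lie outside `E` and in
different connected components of the complement of `E`. -/
def SepPts {X : Type*} [TopologicalSpace X] (E : Set X) (x y : X) : Prop :=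
  x ∉ E ∧ y ∉ E ∧ connectedComponentIn Eᶜ x ≠ connectedComponentIn Eᶜ y

/-- The set `E` separates the set `Y ⊆ X \ E`: two points of `Y` lie in different
connected components of the complement of `E`. -/
def SepSet {X : Type*} [TopologicalSpace X] (E Y : Set X) : Prop :=
  Y ⊆ Eᶜ ∧ ∃ x ∈ Y, ∃ y ∈ Y, connectedComponentIn Eᶜ x ≠ connectedComponentIn Eᶜ y

/-- Two (closed) sets `A` and `B` cross: they intersect, or each separates the other. -/
def Crosses {X : Type*} [TopologicalSpace X] (A B : Set X) : Prop :=
  (A ∩ B).Nonempty ∨ (SepSet A B ∧ SepSet B A)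

/-- There is a (finite) crossing sequence in `𝓐` from `A` to `B`. -/
def CrossSeqFromTo {X : Type*} [TopologicalSpace X] (𝓐 : Set (Set X)) (A B : Set X) : Prop :=
  ∃ (n : ℕ) (c : ℕ → Set X), c 0 = A ∧ c n = B ∧ (∀ i ≤ n, c i ∈ 𝓐) ∧
    ∀ i < n, Crosses (c i) (c (i + 1))

/-- A collection `𝓐` is cross-connected: any two of its elements are joined by a
crossing sequence in `𝓐`. -/
def CrossConnected {X : Type*} [TopologicalSpace X] (𝓐 : Set (Set X)) : Prop :=
  ∀ A ∈ 𝓐, ∀ B ∈ 𝓐, CrossSeqFromTo 𝓐 A B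

/-- There is a crossing sequence `A, A_1, …, A_n, B` in `𝓐` (with `n ≥ 1`) whose
intermediate terms `A_1, …, A_n` are disjoint from `D`. -/
def CrossSeqAvoiding {X : Type*} [TopologicalSpace X] (𝓐 : Set (Set X)) (A B D : Set X) :
    Prop :=
  ∃ n : ℕ, 1 ≤ n ∧ ∃ c : ℕ → Set X, c 0 = A ∧ c (n + 1) = B ∧ (∀ i ≤ n + 1, c i ∈ 𝓐) ∧
    (∀ i ≤ n, Crosses (c i) (c (i + 1))) ∧ ∀ i, 1 ≤ i → i ≤ n → c i ∩ D = ∅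

/-- A collection of subsets of a metric space is null if for every `ε > 0` only finitely
many of its members have diameter greater than `ε`. -/
def NullFam {X : Type*} [PseudoMetricSpace X] (𝓐 : Set (Set X)) : Prop :=
  ∀ ε : ℝ, 0 < ε → {A ∈ 𝓐 | ε < Metric.diam A}.Finite

/-- A collection `𝓐` is fine if any two distinct points are separated by the union of
some finite subcollection of `𝓐`. -/
def FineFam {X : Type*} [PseudoMetricSpace X] (𝓐 : Set (Set X)) : Prop :=
  ∀ x y : X, x ≠ y → ∃ 𝓑 ⊆ 𝓐, 𝓑.Finite ∧ SepPts (⋃₀ 𝓑) x y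

/-- A sequence of maps `T i : X → X` acts as a convergence sequence on the subset `A`,
with repeller `n ∈ A` and attractor `p ∈ A`: for every compact `C ⊆ A \ {n}` and every
open neighborhood `U` of `p`, eventually `T i '' C ⊆ U`. -/
def ConvSeqOn {X : Type*} [TopologicalSpace X] (A : Set X) (T : ℕ → X → X) (n p : X) :
    Prop :=
  n ∈ A ∧ p ∈ A ∧ ∀ C : Set X, C ⊆ A → IsCompact C → n ∉ C →
    ∀ U : Set X, IsOpen U → p ∈ U → ∀ᶠ i in atTop, T i '' C ⊆ U

/-- The stabilizer of a subset `A ⊆ X` in `G`. -/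
def stab (G : Type*) {X : Type*} [Group G] [MulAction G X] (A : Set X) : Set G :=
  {g : G | g • A = A}

/-- The subset `S` of the group `G` acts as a convergence group on `A ⊆ X`: every
sequence of distinct elements of `S` has a subsequence acting as a convergence
sequence on `A`. -/
def ConvGroupOn {G X : Type*} [Group G] [MulAction G X] [TopologicalSpace X]
    (S : Set G) (A : Set X) : Prop :=
  ∀ g : ℕ → G, (∀ i, g i ∈ S) → Function.Injective g →
    ∃ k : ℕ → ℕ, StrictMono k ∧ ∃ n p : X,
      ConvSeqOn A (fun i => (g (k i) • · : X → X)) n p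

/-- `(G, 𝓐)` is a local convergence pairing on `X`. -/
structure IsLocalConvPairing (G : Type*) {X : Type*} [Group G] [MulAction G X]
    [MetricSpace X] (𝓐 : Set (Set X)) : Prop where
  closed : ∀ A ∈ 𝓐, IsClosed A
  invariant : ∀ g : G, ∀ A ∈ 𝓐, g • A ∈ 𝓐
  big : ∀ A ∈ 𝓐, 2 < A.encard
  null : NullFam 𝓐
  fine : FineFam 𝓐
  stabConv : ∀ A ∈ 𝓐, ConvGroupOn (stab G A) A
  connect : ∀ A ∈ 𝓐, ∀ B ∈ 𝓐, (A ∩ B).encard ≤ 2 →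
    (∀ c : X, A ∩ B = {c} → ∀ b ∈ B, b ≠ c → CrossSeqAvoiding 𝓐 A B {b, c}) ∧
    ((¬ ∃ c : X, A ∩ B = {c}) → CrossSeqAvoiding 𝓐 A B (A ∩ B))

/-!
Since `X` admits no essential map to the circle, it is unicoherent, so a component of the complement
of a closed connected set has connected frontier. With fineness and nullness this puts between any
point `p` and any connected set `Y` whose closure misses `p` a *shield*: a finite family of members
of `𝓐` separating `p` from `Y`, whose union contains a connected set met by every member. One-point
members can be dropped because `X` has no cut points.

By nullness, a sequence of distinct elements of `G` has a subsequence under which the images of each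
nondegenerate member of `𝓐` are eventually constant or shrink to a point, and likewise for the
inverses. When all members of a shield between `p` and `Y` shrink to one point `q`, the images of
a sequence converging to `p` and of a sequence in `Y` cannot have limits which are both different
from `q`: these limits could be joined away from `q`, and pulling the connection back would bypass
the shield. If all members of `𝓐` shrink, this forces convergence on `X`. Otherwise the sequence
is, up to a fixed translation, in the stabilizer of some `A`, and shields around the repeller of the
convergence sequence on `A` extend the convergence to `X`.
-/

/-! ### Unicoherence -/

section Unicoherence

variable {X : Type*} [TopologicalSpace X]

/-- Unicoherence: whenever the space is the union of two closed connected sets, their intersection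
is connected. Connectedness of the space itself is not part of the definition, and the empty set
counts as connected. -/
def Unicoherent (X : Type*) [TopologicalSpace X] : Prop :=
  ∀ M N : Set X, IsClosed M → IsClosed N → IsPreconnected M → IsPreconnected N →
    M ∪ N = univ → IsPreconnected (M ∩ N)

theorem exists_lift_of_nullhomotopic {E B : Type*} [TopologicalSpace E] [TopologicalSpace B]
    {π : E → B} (hπ : IsCoveringMap π) (hsurj : π.Surjective) {f : C(X, B)}
    (hf : f.Nullhomotopic) : ∃ φ : C(X, E), ∀ x, π (φ x) = f x := by
  obtain ⟨b, hb⟩ := hf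
  obtain ⟨H⟩ := hb.symm
  obtain ⟨e, rfl⟩ := hsurj b
  have h₀ : ∀ x, H.toContinuousMap (0, x) = π (ContinuousMap.const X e x) := H.apply_zero
  refine ⟨(hπ.liftHomotopy H.toContinuousMap (.const X e) h₀).comp ⟨fun x => (1, x), by fun_prop⟩,
    fun x => ?_⟩
  exact (congrFun (hπ.liftHomotopy_lifts H.toContinuousMap (.const X e) h₀) (1, x)).trans
    (H.apply_one x)

theorem exists_continuousMap_eqOn_of_isClosed_cover {Y : Type*} [TopologicalSpace Y] {M N : Set X}
    (hM : IsClosed M) (hN : IsClosed N) (hMN : M ∪ N = univ) {f g : C(X, Y)}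
    (hfg : EqOn f g (M ∩ N)) : ∃ F : C(X, Y), EqOn F f M ∧ EqOn F g N := by
  classical
  have hF : EqOn (M.piecewise f g) g N := fun x hxN => by
    by_cases hxM : x ∈ M
    · rw [piecewise_eq_of_mem _ _ _ hxM, hfg ⟨hxM, hxN⟩]
    · exact piecewise_eq_of_notMem _ _ _ hxM
  refine ⟨⟨M.piecewise f g, ?_⟩, piecewise_eqOn M f g, hF⟩
  rw [← continuousOn_univ, ← hMN]
  exact (f.continuous.continuousOn.congr (piecewise_eqOn M f g)).union_of_isClosed
    (g.continuous.continuousOn.congr hF) hM hN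

theorem sub_eq_sub_of_circleExp_eq {M : Set X} (hM : IsPreconnected M) {φ u : X → ℝ}
    (hφ : ContinuousOn φ M) (hu : ContinuousOn u M)
    (h : ∀ x ∈ M, Circle.exp (φ x) = Circle.exp (u x)) {a b : X} (ha : a ∈ M) (hb : b ∈ M) :
    φ b - φ a = u b - u a := by
  have key : EqOn φ (fun x => u x + (φ a - u a)) M := by
    refine Circle.isCoveringMap_exp.eqOn_of_comp_eqOn hM hφ
      (hu.add continuousOn_const) (fun x hx => ?_) ha (by ring)
    simp [Circle.exp_add, Circle.exp_sub, h x hx, h a ha]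
  linarith [key hb]

/-- A separation of `M ∩ N` would give a map of winding number one: `exp (iu)` on `M` and
`exp (-iu)` on `N`, where `u` is an Urysohn function with values `0` and `π` on the two parts. -/
theorem unicoherent_of_nullhomotopic [NormalSpace X]
    (hcirc : ∀ f : C(X, Circle), f.Nullhomotopic) : Unicoherent X := by
  intro M N hM hN cM cN hMN
  rw [isPreconnected_closed_iff]
  intro s t hs ht hcov ⟨a, ha, has⟩ ⟨b, hb, hbt⟩
  by_contra hst
  have hdisj : Disjoint (M ∩ N ∩ s) (M ∩ N ∩ t) := disjoint_left.2 fun x hx hx' =>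
    hst ⟨x, hx.1, hx.2, hx'.2⟩
  obtain ⟨v, hv₀, hv₁, -⟩ := exists_continuous_zero_one_of_isClosed
    ((hM.inter hN).inter hs) ((hM.inter hN).inter ht) hdisj
  let u : C(X, ℝ) := Real.pi • v
  have hus : ∀ x ∈ M ∩ N ∩ s, u x = 0 := fun x hx => by simp [u, hv₀ hx]
  have hut : ∀ x ∈ M ∩ N ∩ t, u x = Real.pi := fun x hx => by simp [u, hv₁ hx]
  have hagree : EqOn (Circle.exp.comp u) (Circle.exp.comp (-u)) (M ∩ N) := fun x hx => by
    rcases hcov hx with h | h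
    · simp [hus x ⟨hx, h⟩]
    · have hπ : Circle.exp Real.pi = Circle.exp (-Real.pi) :=
        Circle.exp_eq_exp.2 ⟨1, by push_cast; ring⟩
      simpa [hut x ⟨hx, h⟩] using hπ
  obtain ⟨F, hFM, hFN⟩ := exists_continuousMap_eqOn_of_isClosed_cover hM hN hMN hagree
  obtain ⟨φ, hφ⟩ := exists_lift_of_nullhomotopic Circle.isCoveringMap_exp
    Circle.isAddQuotientCoveringMap_exp.surjective (hcirc F)
  have hM' : φ b - φ a = u b - u a := sub_eq_sub_of_circleExp_eq cM φ.continuous.continuousOn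
    u.continuous.continuousOn (fun x hx => (hφ x).trans (hFM hx)) ha.1 hb.1
  have hN' : φ b - φ a = (-u) b - (-u) a := sub_eq_sub_of_circleExp_eq cN
    φ.continuous.continuousOn (-u).continuous.continuousOn
    (fun x hx => (hφ x).trans (hFN hx)) ha.2 hb.2
  simp only [ContinuousMap.neg_apply, hus a ⟨ha, has⟩, hut b ⟨hb, hbt⟩] at hM' hN'
  linarith [Real.pi_pos]

end Unicoherence

/-! ### Connected sets and components -/

section Components

variable {X : Type*} [TopologicalSpace X]

theorem isClosed_sUnion_of_finite {𝓢 : Set (Set X)} (hfin : 𝓢.Finite)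
    (hclosed : ∀ D ∈ 𝓢, IsClosed D) : IsClosed (⋃₀ 𝓢) := by
  rw [sUnion_eq_biUnion]
  exact hfin.isClosed_biUnion hclosed

theorem inter_frontier_nonempty {R Z : Set X} (hR : IsPreconnected R) (hZ : (R ∩ Z).Nonempty)
    (hZc : (R ∩ Zᶜ).Nonempty) : (R ∩ frontier Z).Nonempty := by
  by_contra hemp
  obtain ⟨y, hyR, hyZ⟩ := hZ
  obtain ⟨p, hpR, hpZ⟩ := hZc
  refine hpZ (interior_subset (hR.subset_of_closure_inter_subset isOpen_interior ⟨y, hyR, ?_⟩ ?_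
    hpR))
  · by_contra hy
    exact hemp ⟨y, hyR, subset_closure hyZ, hy⟩
  · rintro x ⟨hx, hxR⟩
    by_contra hxZ
    exact hemp ⟨x, hxR, closure_mono interior_subset hx, hxZ⟩

theorem frontier_connectedComponentIn_subset [LocallyConnectedSpace X] {U : Set X}
    (hU : IsOpen U) (x : X) : frontier (connectedComponentIn U x) ⊆ Uᶜ := by
  intro y hy hyU
  rw [hU.connectedComponentIn.frontier_eq] at hy
  obtain ⟨z, hzy, hzx⟩ := mem_closure_iff.1 hy.1 _ hU.connectedComponentIn
    (mem_connectedComponentIn hyU)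
  apply hy.2
  rw [connectedComponentIn_eq hzx, ← connectedComponentIn_eq hzy]
  exact mem_connectedComponentIn hyU

/-- The complement of a component of `Kᶜ` is the union of `K` and the other components, each of
whose closures meets `K`. -/
theorem isPreconnected_compl_connectedComponentIn_compl [PreconnectedSpace X]
    [LocallyConnectedSpace X] {K : Set X} (hK : IsClosed K) (cK : IsPreconnected K)
    (hne : K.Nonempty) (y : X) : IsPreconnected (connectedComponentIn Kᶜ y)ᶜ := by
  obtain ⟨k, hk⟩ := hne
  have hKsub : K ⊆ (connectedComponentIn Kᶜ y)ᶜ :=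
    fun z hz h => connectedComponentIn_subset _ _ h hz
  refine isPreconnected_of_forall k fun x hx => ?_
  by_cases hxK : x ∈ K
  · exact ⟨K, hKsub, hk, hxK, cK⟩
  have hxC : x ∈ connectedComponentIn Kᶜ x := mem_connectedComponentIn hxK
  obtain ⟨z, hz⟩ : (frontier (connectedComponentIn Kᶜ x)).Nonempty :=
    nonempty_frontier_iff.2 ⟨⟨x, hxC⟩,
      fun h => connectedComponentIn_subset Kᶜ x (h ▸ mem_univ k) hk⟩
  have hzK : z ∈ K := by
    simpa using frontier_connectedComponentIn_subset hK.isOpen_compl x hz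
  refine ⟨K ∪ closure (connectedComponentIn Kᶜ x), union_subset hKsub ?_, Or.inl hk,
    Or.inr (subset_closure hxC),
    cK.union z hzK (frontier_subset_closure hz) isPreconnected_connectedComponentIn.closure⟩
  refine closure_minimal (fun w hw hw' => hx ?_) hK.isOpen_compl.connectedComponentIn.isClosed_compl
  rwa [connectedComponentIn_eq hw', ← connectedComponentIn_eq hw]

theorem Unicoherent.isPreconnected_frontier_connectedComponentIn_compl [PreconnectedSpace X]
    [LocallyConnectedSpace X] (hX : Unicoherent X) {K : Set X} (hK : IsClosed K)
    (cK : IsPreconnected K) (hne : K.Nonempty) (y : X) :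
    IsPreconnected (frontier (connectedComponentIn Kᶜ y)) := by
  rw [frontier_eq_closure_inter_closure,
    hK.isOpen_compl.connectedComponentIn.isClosed_compl.closure_eq]
  refine hX _ _ isClosed_closure hK.isOpen_compl.connectedComponentIn.isClosed_compl
    isPreconnected_connectedComponentIn.closure
    (isPreconnected_compl_connectedComponentIn_compl hK cK hne y) ?_
  exact univ_subset_iff.1 ((union_compl_self _).symm.subset.trans
    (union_subset_union_left _ subset_closure))

theorem exists_isOpen_isPreconnected_closure_subset [RegularSpace X] [LocallyConnectedSpace X]
    {x : X} {U : Set X} (hU : U ∈ 𝓝 x) :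
    ∃ V, IsOpen V ∧ IsPreconnected V ∧ x ∈ V ∧ closure V ⊆ U := by
  obtain ⟨t, ht, htc, htU⟩ := exists_mem_nhds_isClosed_subset hU
  refine ⟨connectedComponentIn (interior t) x, isOpen_interior.connectedComponentIn,
    isPreconnected_connectedComponentIn, mem_connectedComponentIn (mem_interior_iff_mem_nhds.2 ht),
    (closure_minimal ?_ htc).trans htU⟩
  exact (connectedComponentIn_subset _ _).trans interior_subset

theorem exists_isOpen_isPreconnected_mem_mem [RegularSpace X] [LocallyConnectedSpace X]
    {U : Set X} (hU : IsOpen U) (cU : IsPreconnected U) {x y : X} (hx : x ∈ U) (hy : y ∈ U) :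
    ∃ R, IsOpen R ∧ IsPreconnected R ∧ x ∈ R ∧ y ∈ R ∧ closure R ⊆ U := by
  refine cU.induction₂
    (fun x y => ∃ R, IsOpen R ∧ IsPreconnected R ∧ x ∈ R ∧ y ∈ R ∧ closure R ⊆ U)
    (fun z hz => ?_) ?_ ?_ hx hy
  · obtain ⟨V, oV, cV, hzV, hVU⟩ := exists_isOpen_isPreconnected_closure_subset (hU.mem_nhds hz)
    filter_upwards [mem_nhdsWithin_of_mem_nhds (oV.mem_nhds hzV)] with w hw
    exact ⟨V, oV, cV, hzV, hw, hVU⟩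
  · rintro u v w - - - ⟨R, oR, cR, hu, hv, hR⟩ ⟨S, oS, cS, hv', hw, hS⟩
    exact ⟨R ∪ S, oR.union oS, cR.union v hv hv' cS, Or.inl hu, Or.inr hw,
      closure_union.subset.trans (union_subset hR hS)⟩
  · rintro u v - - ⟨R, oR, cR, hu, hv, hR⟩
    exact ⟨R, oR, cR, hv, hu, hR⟩

theorem exists_isOpen_isPreconnected_superset [RegularSpace X] [LocallyConnectedSpace X]
    {U K : Set X} (hU : IsOpen U) (cU : IsPreconnected U) (hK : IsCompact K) (hKU : K ⊆ U) :
    ∃ R, IsOpen R ∧ IsPreconnected R ∧ K ⊆ R ∧ closure R ⊆ U := by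
  obtain rfl | ⟨k, hk⟩ := K.eq_empty_or_nonempty
  · exact ⟨∅, isOpen_empty, isPreconnected_empty, subset_rfl, by simp⟩
  suffices ∃ R, IsOpen R ∧ IsPreconnected R ∧ k ∈ R ∧ K ⊆ R ∧ closure R ⊆ U by
    obtain ⟨R, oR, cR, -, hKR, hRU⟩ := this
    exact ⟨R, oR, cR, hKR, hRU⟩
  refine hK.induction_on
    (p := fun S => ∃ R, IsOpen R ∧ IsPreconnected R ∧ k ∈ R ∧ S ⊆ R ∧ closure R ⊆ U) ?_ ?_ ?_ ?_
  · obtain ⟨R, oR, cR, hkR, -, hRU⟩ := exists_isOpen_isPreconnected_mem_mem hU cU (hKU hk) (hKU hk)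
    exact ⟨R, oR, cR, hkR, empty_subset _, hRU⟩
  · rintro S T hST ⟨R, oR, cR, hkR, hTR, hRU⟩
    exact ⟨R, oR, cR, hkR, hST.trans hTR, hRU⟩
  · rintro S T ⟨R, oR, cR, hkR, hSR, hRU⟩ ⟨R', oR', cR', hkR', hTR', hRU'⟩
    exact ⟨R ∪ R', oR.union oR', cR.union k hkR hkR' cR', Or.inl hkR,
      union_subset_union hSR hTR', closure_union.subset.trans (union_subset hRU hRU')⟩
  · intro x hx
    obtain ⟨R, oR, cR, hkR, hxR, hRU⟩ :=
      exists_isOpen_isPreconnected_mem_mem hU cU (hKU hk) (hKU hx)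
    exact ⟨R, mem_nhdsWithin_of_mem_nhds (oR.mem_nhds hxR), R, oR, cR, hkR, subset_rfl, hRU⟩

end Components

/-! ### Separation -/

section Separation

variable {X : Type*} [TopologicalSpace X]

theorem sepPts_iff {E : Set X} {x y : X} : SepPts E x y ↔ x ∉ E ∧ y ∉ E ∧
    ∀ R, IsPreconnected R → x ∈ R → y ∈ R → (R ∩ E).Nonempty := by
  refine and_congr_right fun hx => and_congr_right fun hy => ⟨fun hne R cR hxR hyR => ?_, ?_⟩
  · by_contra hR
    have hRE : R ⊆ Eᶜ := fun z hz hzE => hR ⟨z, hz, hzE⟩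
    exact hne (connectedComponentIn_eq (cR.subset_connectedComponentIn hxR hRE hyR))
  · intro hR heq
    obtain ⟨z, hz, hzE⟩ := hR _ isPreconnected_connectedComponentIn (mem_connectedComponentIn hx)
      (by rw [heq]; exact mem_connectedComponentIn hy)
    exact connectedComponentIn_subset _ _ hz hzE

theorem SepPts.mono {E F : Set X} {x y : X} (h : SepPts E x y) (hEF : E ⊆ F) (hx : x ∉ F)
    (hy : y ∉ F) : SepPts F x y :=
  sepPts_iff.2 ⟨hx, hy, fun R cR hxR hyR =>
    ((sepPts_iff.1 h).2.2 R cR hxR hyR).mono (inter_subset_inter_right R hEF)⟩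

theorem SepPts.nontrivial [PreconnectedSpace X] (hcut : ∀ x : X, IsPreconnected ({x}ᶜ : Set X))
    {E : Set X} {x y : X} (h : SepPts E x y) : E.Nontrivial := by
  obtain ⟨hx, hy, hR⟩ := sepPts_iff.1 h
  obtain ⟨b, -, hb⟩ := hR univ isPreconnected_univ (mem_univ x) (mem_univ y)
  obtain ⟨c, hc, hcE⟩ := hR {b}ᶜ (hcut b) (fun h => hx (h ▸ hb)) (fun h => hy (h ▸ hb))
  exact ⟨c, hcE, b, hb, hc⟩

/-- The set `B` is the part of the frontier of `Z` that faces `Y`. -/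
theorem Unicoherent.exists_isPreconnected_subset_frontier [PreconnectedSpace X]
    [LocallyConnectedSpace X] (hX : Unicoherent X) {Z Y : Set X} (hZ : IsOpen Z)
    (cZ : IsPreconnected Z) (cY : IsPreconnected Y) (hY : Y.Nonempty) (hYZ : Y ⊆ (closure Z)ᶜ)
    {p : X} (hp : p ∈ Z) : ∃ B ⊆ frontier Z, IsPreconnected B ∧ ∀ y ∈ Y, SepPts B p y := by
  obtain ⟨y₀, hy₀⟩ := hY
  set W := connectedComponentIn (closure Z)ᶜ y₀
  have oW : IsOpen W := isClosed_closure.isOpen_compl.connectedComponentIn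
  have hYW : Y ⊆ W := cY.subset_connectedComponentIn hy₀ hYZ
  have hWZ : W ⊆ (closure Z)ᶜ := connectedComponentIn_subset _ _
  have hfrW : frontier W ⊆ frontier Z := by
    intro b hb
    have hbZ : b ∈ closure Z := by
      simpa using frontier_connectedComponentIn_subset isClosed_closure.isOpen_compl y₀ hb
    have hbZ' : b ∈ (interior (closure Z))ᶜ := by
      rw [← closure_compl]
      exact closure_mono hWZ (frontier_subset_closure hb)
    exact frontier_closure_subset ⟨subset_closure hbZ, hbZ'⟩
  refine ⟨frontier W, hfrW, hX.isPreconnected_frontier_connectedComponentIn_compl isClosed_closure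
    cZ.closure ⟨p, subset_closure hp⟩ y₀, fun y hy => sepPts_iff.2 ⟨?_, ?_, ?_⟩⟩
  · exact fun h => hZ.inter_frontier_eq.subset ⟨hp, hfrW h⟩
  · exact fun h => oW.inter_frontier_eq.subset ⟨hYW hy, h⟩
  · exact fun R cR hpR hyR => inter_frontier_nonempty cR ⟨y, hyR, hYW hy⟩
      ⟨p, hpR, fun h => hWZ h (subset_closure hp)⟩

end Separation

/-! ### Shields -/

section Shields

variable {X : Type*}

/-- A family of sets is linked if any two of its members are joined by a finite chain of members
in which consecutive ones intersect. -/
def Linked (𝓢 : Set (Set X)) : Prop :=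
  ∀ D ∈ 𝓢, ∀ E ∈ 𝓢, Relation.ReflTransGen (fun D E => (D ∩ E).Nonempty ∧ E ∈ 𝓢) D E

/-- A shield between the point `p` and the set `Y`: a finite linked family of sets whose union
separates `p` from every point of `Y`. In particular its members avoid `Y` and, if `Y` is
nonempty, also `p`. -/
structure IsShield [TopologicalSpace X] (𝓢 : Set (Set X)) (p : X) (Y : Set X) : Prop where
  finite : 𝓢.Finite
  linked : Linked 𝓢
  sep : ∀ y ∈ Y, SepPts (⋃₀ 𝓢) p y

/-- The family `𝓐` has shields if every point is shielded, by members of `𝓐`, from every nonempty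
connected set whose closure misses it. -/
def HasShields [TopologicalSpace X] (𝓐 : Set (Set X)) : Prop :=
  ∀ (p : X) (Y : Set X), IsPreconnected Y → Y.Nonempty → p ∉ closure Y →
    ∃ 𝓢 ⊆ 𝓐, IsShield 𝓢 p Y

/-- The members meeting `B` that can be reached from `D` by chains cover a clopen part of `B`. -/
theorem linked_of_isPreconnected [TopologicalSpace X] {𝓢 : Set (Set X)} (hfin : 𝓢.Finite)
    (hclosed : ∀ D ∈ 𝓢, IsClosed D) {B : Set X} (cB : IsPreconnected B) (hB : B ⊆ ⋃₀ 𝓢)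
    (hmeet : ∀ D ∈ 𝓢, (D ∩ B).Nonempty) : Linked 𝓢 := by
  intro D hD
  let 𝓠 : Set (Set X) :=
    {E ∈ 𝓢 | Relation.ReflTransGen (fun D E => (D ∩ E).Nonempty ∧ E ∈ 𝓢) D E}
  have h𝓠 : 𝓠 ⊆ 𝓢 := sep_subset _ _
  have hstep : ∀ E ∈ 𝓠, ∀ F ∈ 𝓢, (E ∩ F).Nonempty → F ∈ 𝓠 :=
    fun E hE F hF hEF => ⟨hF, hE.2.tail ⟨hEF, hF⟩⟩
  have hdisj : Disjoint (⋃₀ 𝓠) (⋃₀ (𝓢 \ 𝓠)) := by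
    rw [disjoint_left]
    rintro x ⟨E, hE, hxE⟩ ⟨F, hF, hxF⟩
    exact hF.2 (hstep E hE F hF.1 ⟨x, hxE, hxF⟩)
  have hcov : B ⊆ ⋃₀ 𝓠 ∪ ⋃₀ (𝓢 \ 𝓠) := by rwa [← sUnion_union, union_sdiff_cancel h𝓠]
  have hsub : B ⊆ ⋃₀ 𝓠 := by
    refine (isPreconnected_iff_subset_of_disjoint_closed.1 cB _ _
      (isClosed_sUnion_of_finite (hfin.subset h𝓠) fun E hE => hclosed E hE.1)
      (isClosed_sUnion_of_finite (hfin.subset sdiff_subset) fun E hE => hclosed E hE.1)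
      hcov (by rw [hdisj.inter_eq, inter_empty])).resolve_right fun h => ?_
    obtain ⟨b, hbD, hbB⟩ := hmeet D hD
    exact disjoint_left.1 hdisj ⟨D, ⟨hD, .refl⟩, hbD⟩ (h hbB)
  intro E hE
  obtain ⟨b, hbE, hbB⟩ := hmeet E hE
  obtain ⟨F, hF, hbF⟩ := hsub hbB
  exact (hstep F hF E hE ⟨b, hbF, hbE⟩).2

/-- One-point members that are not redundant are isolated in `B`. -/
theorem subset_sUnion_nontrivial [TopologicalSpace X] [T1Space X] {𝓣 : Set (Set X)}
    (hfin : 𝓣.Finite) (hclosed : ∀ D ∈ 𝓣, IsClosed D) {B : Set X} (cB : IsPreconnected B)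
    (hnt : B.Nontrivial) (hB : B ⊆ ⋃₀ 𝓣) : B ⊆ ⋃₀ {D ∈ 𝓣 | D.Nontrivial} := by
  set 𝓢 := {D ∈ 𝓣 | D.Nontrivial}
  have h𝓢 : IsClosed (⋃₀ 𝓢) :=
    isClosed_sUnion_of_finite (hfin.subset (sep_subset _ _)) fun D hD => hclosed D hD.1
  have hF : ((⋃₀ {D ∈ 𝓣 | ¬ D.Nontrivial}) \ ⋃₀ 𝓢).Finite := by
    refine ((hfin.subset (sep_subset _ _)).sUnion ?_).subset sdiff_subset
    exact fun D hD => (not_nontrivial_iff.1 hD.2).finite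
  have hcov : B ⊆ ⋃₀ 𝓢 ∪ ((⋃₀ {D ∈ 𝓣 | ¬ D.Nontrivial}) \ ⋃₀ 𝓢) := by
    rw [union_sdiff_self, ← sUnion_union]
    refine hB.trans (sUnion_subset_sUnion fun D hD => ?_)
    exact (em D.Nontrivial).imp (⟨hD, ·⟩) (⟨hD, ·⟩)
  exact (isPreconnected_iff_subset_of_disjoint_closed.1 cB _ _ h𝓢 hF.isClosed hcov
    (by rw [inter_sdiff_self, inter_empty])).resolve_right
    fun h => cB.infinite_of_nontrivial hnt (hF.subset h)

theorem FineFam.exists_finite_disjoint_component [PseudoMetricSpace X] [LocallyConnectedSpace X]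
    {𝓐 : Set (Set X)} (hfine : FineFam 𝓐) (hclosed : ∀ A ∈ 𝓐, IsClosed A) {p : X} {C : Set X}
    (hC : IsCompact C) (hp : p ∉ C) : ∃ 𝓣 ⊆ 𝓐, 𝓣.Finite ∧ p ∉ ⋃₀ 𝓣 ∧
      Disjoint (connectedComponentIn (⋃₀ 𝓣)ᶜ p) C := by
  refine hC.induction_on (p := fun C => ∃ 𝓣 ⊆ 𝓐, 𝓣.Finite ∧ p ∉ ⋃₀ 𝓣 ∧
      Disjoint (connectedComponentIn (⋃₀ 𝓣)ᶜ p) C) ?_ ?_ ?_ ?_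
  · exact ⟨∅, empty_subset _, finite_empty, by simp, disjoint_empty _⟩
  · rintro S T hST ⟨𝓣, h𝓣, hfin, hp𝓣, hT⟩
    exact ⟨𝓣, h𝓣, hfin, hp𝓣, hT.mono_right hST⟩
  · rintro S T ⟨𝓣, h𝓣, hfin, hp𝓣, hS⟩ ⟨𝓣', h𝓣', hfin', hp𝓣', hT⟩
    refine ⟨𝓣 ∪ 𝓣', union_subset h𝓣 h𝓣', hfin.union hfin', ?_, ?_⟩
    · rw [sUnion_union]
      exact fun h => h.elim hp𝓣 hp𝓣'
    · refine disjoint_union_right.2 ⟨hS.mono_left ?_, hT.mono_left ?_⟩ <;>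
        refine connectedComponentIn_mono p (compl_subset_compl.2 (sUnion_subset_sUnion ?_))
      exacts [subset_union_left, subset_union_right]
  · intro x hx
    obtain ⟨𝓑, h𝓑, hfin, hp𝓑, hx𝓑, hne⟩ := hfine p x fun h => hp (h ▸ hx)
    have hopen : IsOpen (⋃₀ 𝓑)ᶜ :=
      (isClosed_sUnion_of_finite hfin fun D hD => hclosed D (h𝓑 hD)).isOpen_compl
    refine ⟨connectedComponentIn (⋃₀ 𝓑)ᶜ x, mem_nhdsWithin_of_mem_nhds
      (hopen.connectedComponentIn.mem_nhds (mem_connectedComponentIn hx𝓑)), 𝓑, h𝓑, hfin, hp𝓑, ?_⟩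
    exact disjoint_left.2 fun z hzp hzx =>
      hne ((connectedComponentIn_eq hzp).trans (connectedComponentIn_eq hzx).symm)

/-- Finitely many members are large enough to come close to `p` and leave `U`; their union is closed
and, those through `p` being excluded, has a neighbourhood of `p` in its complement. -/
theorem NullFam.exists_nhds_subset_of_inter_nonempty [PseudoMetricSpace X] [BoundedSpace X]
    {𝓐 : Set (Set X)} (hnull : NullFam 𝓐) (hclosed : ∀ A ∈ 𝓐, IsClosed A) {p : X} {U : Set X}
    (hU : U ∈ 𝓝 p) : ∃ V ∈ 𝓝 p, ∀ D ∈ 𝓐, p ∉ D → (D ∩ V).Nonempty → D ⊆ U := by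
  obtain ⟨ε, hε, hεU⟩ := Metric.mem_nhds_iff.1 hU
  let 𝓕 : Set (Set X) := {D ∈ 𝓐 | p ∉ D ∧ ε / 2 < Metric.diam D}
  have h𝓕 : IsClosed (⋃₀ 𝓕) := isClosed_sUnion_of_finite
    ((hnull (ε / 2) (half_pos hε)).subset fun D hD => ⟨hD.1, hD.2.2⟩) fun D hD => hclosed D hD.1
  have hp : p ∉ ⋃₀ 𝓕 := fun ⟨D, hD, hpD⟩ => hD.2.1 hpD
  refine ⟨_, inter_mem (h𝓕.isOpen_compl.mem_nhds hp) (Metric.ball_mem_nhds p (half_pos hε)), ?_⟩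
  rintro D hD hpD ⟨x, hxD, hx𝓕, hx⟩
  have hdiam : Metric.diam D ≤ ε / 2 := by
    by_contra! h
    exact hx𝓕 ⟨D, ⟨hD, hpD, h⟩, hxD⟩
  intro y hy
  refine hεU (Metric.mem_ball.2 ?_)
  calc dist y p ≤ dist y x + dist x p := dist_triangle _ _ _
    _ < ε / 2 + ε / 2 := add_lt_add_of_le_of_lt
      ((Metric.dist_le_diam_of_mem (.all D) hy hxD).trans hdiam) hx
    _ = ε := add_halves ε

theorem FineFam.exists_isOpen_frontier_subset [PseudoMetricSpace X] [CompactSpace X]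
    [LocallyConnectedSpace X] {𝓐 : Set (Set X)} (hfine : FineFam 𝓐)
    (hclosed : ∀ A ∈ 𝓐, IsClosed A) {p : X} {W : Set X} (hW : W ∈ 𝓝 p) :
    ∃ 𝓣 ⊆ 𝓐, 𝓣.Finite ∧ p ∉ ⋃₀ 𝓣 ∧ ∃ Z, IsOpen Z ∧ IsPreconnected Z ∧ p ∈ Z ∧ closure Z ⊆ W ∧
      frontier Z ⊆ ⋃₀ 𝓣 := by
  obtain ⟨t, ht, htc, htW⟩ := exists_mem_nhds_isClosed_subset hW
  obtain ⟨𝓣, h𝓣, hfin, hp𝓣, hZt⟩ := hfine.exists_finite_disjoint_component hclosed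
    (isOpen_interior (s := t)).isClosed_compl.isCompact
    (notMem_compl_iff.2 (mem_interior_iff_mem_nhds.2 ht))
  have oU : IsOpen (⋃₀ 𝓣)ᶜ :=
    (isClosed_sUnion_of_finite hfin fun D hD => hclosed D (h𝓣 hD)).isOpen_compl
  refine ⟨𝓣, h𝓣, hfin, hp𝓣, connectedComponentIn (⋃₀ 𝓣)ᶜ p, oU.connectedComponentIn,
    isPreconnected_connectedComponentIn, mem_connectedComponentIn hp𝓣, ?_, ?_⟩
  · exact (closure_minimal ((disjoint_compl_right_iff_subset.1 hZt).trans interior_subset)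
      htc).trans htW
  · simpa using frontier_connectedComponentIn_subset oU p

theorem hasShields_setOf_nontrivial [MetricSpace X] [CompactSpace X] [PreconnectedSpace X]
    [LocallyConnectedSpace X] (hX : Unicoherent X)
    (hcut : ∀ x : X, IsPreconnected ({x}ᶜ : Set X)) {𝓐 : Set (Set X)}
    (hclosed : ∀ A ∈ 𝓐, IsClosed A) (hnull : NullFam 𝓐) (hfine : FineFam 𝓐) :
    HasShields {A ∈ 𝓐 | A.Nontrivial} := by
  intro p Y cY ⟨y₀, hy₀⟩ hpY
  have hpY' : (closure Y)ᶜ ∈ 𝓝 p := isClosed_closure.isOpen_compl.mem_nhds hpY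
  obtain ⟨V, hV, hVA⟩ := hnull.exists_nhds_subset_of_inter_nonempty hclosed hpY'
  obtain ⟨𝓣, h𝓣, hfin, hp𝓣, Z, oZ, cZ, hpZ, hZVY, hZ𝓣⟩ :=
    hfine.exists_isOpen_frontier_subset hclosed (inter_mem hV hpY')
  obtain ⟨B, hBZ, cB, hBsep⟩ := hX.exists_isPreconnected_subset_frontier oZ cZ cY ⟨y₀, hy₀⟩
    (fun y hy hyZ => (hZVY hyZ).2 (subset_closure hy)) hpZ
  have hB𝓣 : B ⊆ ⋃₀ {D ∈ 𝓣 | D.Nontrivial} :=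
    subset_sUnion_nontrivial hfin (fun D hD => hclosed D (h𝓣 hD)) cB
      ((hBsep y₀ hy₀).nontrivial hcut) (hBZ.trans hZ𝓣)
  let 𝓢 : Set (Set X) := {D ∈ 𝓣 | D.Nontrivial ∧ (D ∩ B).Nonempty}
  have h𝓢 : 𝓢.Finite := hfin.subset (sep_subset _ _)
  have hp𝓢 : ∀ D ∈ 𝓢, p ∉ D := fun D hD hpD => hp𝓣 ⟨D, hD.1, hpD⟩
  have hB𝓢 : B ⊆ ⋃₀ 𝓢 := fun b hb => by
    obtain ⟨D, hD, hbD⟩ := hB𝓣 hb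
    exact ⟨D, ⟨hD.1, hD.2, b, hbD, hb⟩, hbD⟩
  refine ⟨𝓢, fun D hD => ⟨h𝓣 hD.1, hD.2.1⟩, h𝓢, linked_of_isPreconnected h𝓢
    (fun D hD => hclosed D (h𝓣 hD.1)) cB hB𝓢 fun D hD => hD.2.2, fun y hy =>
    (hBsep y hy).mono hB𝓢 (fun ⟨D, hD, hpD⟩ => hp𝓢 D hD hpD) ?_⟩
  rintro ⟨D, hD, hyD⟩
  obtain ⟨b, hbD, hbB⟩ := hD.2.2
  exact hVA D (h𝓣 hD.1) (hp𝓢 D hD) ⟨b, hbD, (hZVY (frontier_subset_closure (hBZ hbB))).1⟩ hyD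
    (subset_closure hy)

end Shields

/-! ### Convergence sequences -/

section ConvSeq

variable {X : Type*} [TopologicalSpace X] {A : Set X} {T : ℕ → X → X} {n p : X}

theorem convSeqOn_univ_of_forall [CompactSpace X] [FirstCountableTopology X]
    (H : ∀ φ : ℕ → ℕ, StrictMono φ → ∀ (c : ℕ → X) (c₀ c₁ : X), c₀ ≠ n →
      Tendsto c atTop (𝓝 c₀) → Tendsto (fun i => T (φ i) (c i)) atTop (𝓝 c₁) → c₁ = p) :
    ConvSeqOn univ T n p := by
  refine ⟨mem_univ _, mem_univ _, fun C _ hC hnC U hU hpU => ?_⟩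
  by_contra hev
  obtain ⟨φ, hφ, hbad⟩ := extraction_of_frequently_atTop (not_eventually.1 hev)
  have hescape : ∀ i, ∃ c ∈ C, T (φ i) c ∉ U := by
    simpa [image_subset_iff, not_subset] using hbad
  choose c hc hcU using hescape
  obtain ⟨c₀, hc₀, ψ, hψ, hcψ⟩ := hC.tendsto_subseq hc
  obtain ⟨c₁, χ, hχ, hTχ⟩ := CompactSpace.tendsto_subseq fun i => T (φ (ψ i)) (c (ψ i))
  have hc₁ : c₁ = p := H (φ ∘ ψ ∘ χ) (hφ.comp (hψ.comp hχ)) (c ∘ ψ ∘ χ) c₀ c₁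
    (fun h => hnC (h ▸ hc₀)) (hcψ.comp hχ.tendsto_atTop) hTχ
  have hc₁U : c₁ ∈ Uᶜ := hU.isClosed_compl.mem_of_tendsto hTχ (.of_forall fun i => hcU _)
  exact hc₁U (hc₁ ▸ hpU)

theorem ConvSeqOn.comp (h : ConvSeqOn A T n p) {φ : ℕ → ℕ} (hφ : Tendsto φ atTop atTop) :
    ConvSeqOn A (fun i => T (φ i)) n p :=
  ⟨h.1, h.2.1, fun C hCA hC hnC U hU hpU => hφ.eventually (h.2.2 C hCA hC hnC U hU hpU)⟩

theorem ConvSeqOn.tendsto (h : ConvSeqOn A T n p) {a : X} (ha : a ∈ A) (han : a ≠ n) :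
    Tendsto (fun i => T i a) atTop (𝓝 p) := by
  refine tendsto_nhds.2 fun U hU hpU => ?_
  filter_upwards [h.2.2 {a} (singleton_subset_iff.2 ha) isCompact_singleton han.symm U hU hpU]
    with i hi
  exact hi (mem_image_of_mem _ rfl)

variable {G : Type*} [Group G] [MulAction G X]

theorem ConvSeqOn.const_smul [ContinuousConstSMul G X] (h : ConvSeqOn univ T n p) (f : G) :
    ConvSeqOn univ (fun i x => f • T i x) n (f • p) := by
  refine ⟨mem_univ _, mem_univ _, fun C hCA hC hnC U hU hpU => ?_⟩
  filter_upwards [h.2.2 C hCA hC hnC _ (hU.preimage (continuous_const_smul f)) hpU] with i hi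
  rintro _ ⟨x, hx, rfl⟩
  exact hi (mem_image_of_mem _ hx)

theorem ConvSeqOn.tendsto_inv_smul [T1Space X] {g : ℕ → G} (h : ConvSeqOn A (g · • ·) n p)
    (hA : IsCompact A) (hgA : ∀ i, g i • A = A) {b : X} (hb : b ∈ A) (hbp : b ≠ p) :
    Tendsto (fun i => (g i)⁻¹ • b) atTop (𝓝 n) := by
  refine tendsto_nhds.2 fun V hV hnV => ?_
  filter_upwards [h.2.2 (A \ V) sdiff_subset (hA.diff hV) (fun h => h.2 hnV) {b}ᶜ
    isOpen_compl_singleton hbp.symm] with i hi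
  by_contra hiV
  have hbA : (g i)⁻¹ • b ∈ A := mem_smul_set_iff_inv_smul_mem.1 ((hgA i).symm ▸ hb)
  exact hi (mem_image_of_mem _ ⟨hbA, hiV⟩) (smul_inv_smul _ _)

end ConvSeq

/-! ### Shrinking sets -/

section Shrinking

variable {G X ι κ : Type*} {l : Filter ι}

/-- The images `h i • D` shrink to the point `q` along `l`: every neighbourhood of `q` eventually
contains them. -/
def ShrinksTo [SMul G X] [TopologicalSpace X] (h : ι → G) (l : Filter ι) (D : Set X) (q : X) :
    Prop :=
  Tendsto (fun i => h i • D) l (𝓝 q).smallSets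

/-- Along `l`, the images under `h i` of each member of `𝓐` are either eventually a fixed set or
shrink to a point. -/
def Dichotomous [SMul G X] [TopologicalSpace X] (𝓐 : Set (Set X)) (h : ι → G) (l : Filter ι) :
    Prop :=
  ∀ A ∈ 𝓐, EventuallyConst (fun i => h i • A) l ∨ ∃ q, ShrinksTo h l A q

theorem ShrinksTo.tendsto [SMul G X] [TopologicalSpace X] {h : ι → G} {D : Set X} {q t : X}
    (hD : ShrinksTo h l D q) (ht : t ∈ D) : Tendsto (fun i => h i • t) l (𝓝 q) :=
  fun _ hU => (tendsto_smallSets_iff.1 hD _ hU).mono fun _ hi => hi (smul_mem_smul_set ht)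

theorem ShrinksTo.const_mul [Monoid G] [MulAction G X] [TopologicalSpace X]
    [ContinuousConstSMul G X] {h : ι → G} {D : Set X} {q : X} (hD : ShrinksTo h l D q) (f : G) :
    ShrinksTo (fun i => f * h i) l D (f • q) := by
  refine tendsto_smallSets_iff.2 fun U hU => ?_
  filter_upwards [tendsto_smallSets_iff.1 hD _ ((continuous_const_smul f).continuousAt hU)]
    with i hi
  rw [mul_smul]
  exact image_subset_iff.2 hi

theorem Dichotomous.comp [SMul G X] [TopologicalSpace X] {𝓐 : Set (Set X)} {h : ι → G}
    (hd : Dichotomous 𝓐 h l) {φ : κ → ι} {l' : Filter κ} (hφ : Tendsto φ l' l) :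
    Dichotomous 𝓐 (fun i => h (φ i)) l' :=
  fun A hA => (hd A hA).imp (·.comp_tendsto hφ) fun ⟨q, hq⟩ => ⟨q, Tendsto.comp hq hφ⟩

theorem Dichotomous.const_mul [Monoid G] [MulAction G X] [TopologicalSpace X]
    [ContinuousConstSMul G X] {𝓐 : Set (Set X)} {h : ι → G} (hd : Dichotomous 𝓐 h l) (f : G) :
    Dichotomous 𝓐 (fun i => f * h i) l := by
  refine fun A hA => (hd A hA).imp (fun hc => ?_) fun ⟨q, hq⟩ => ⟨f • q, hq.const_mul f⟩
  simp only [mul_smul]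
  exact hc.comp (f • ·)

/-- If the images of `E` were eventually a fixed set, it would contain `p`, and `E` would contain
`m`. -/
theorem Dichotomous.shrinksTo_of_tendsto [Group G] [MulAction G X] [TopologicalSpace X]
    [T2Space X] [ContinuousConstSMul G X] [l.NeBot] {𝓐 : Set (Set X)} {h : ι → G}
    (hd : Dichotomous 𝓐 h l) {E : Set X} (hE : E ∈ 𝓐) (hclosed : IsClosed E) {t p m : X}
    (ht : t ∈ E) (htp : Tendsto (fun i => h i • t) l (𝓝 p))
    (hm : Tendsto (fun i => (h i)⁻¹ • p) l (𝓝 m)) (hmE : m ∉ E) : ShrinksTo h l E p := by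
  rcases hd E hE with hconst | ⟨q, hq⟩
  · obtain ⟨F, hF⟩ := eventuallyConst_iff_exists_eventuallyEq.1 hconst
    replace hF : ∀ᶠ i in l, h i • E = F := hF
    have hFclosed : IsClosed F := by
      obtain ⟨i, rfl⟩ := hF.exists
      exact hclosed.smul (h i)
    have hpF : p ∈ F := hFclosed.mem_of_tendsto htp
      (hF.mono fun i hi => hi ▸ smul_mem_smul_set ht)
    exact absurd (hclosed.mem_of_tendsto hm
      (hF.mono fun i hi => mem_smul_set_iff_inv_smul_mem.1 (hi.symm ▸ hpF))) hmE
  · rwa [tendsto_nhds_unique htp (hq.tendsto ht)]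

theorem Linked.shrinksTo [SMul G X] [TopologicalSpace X] {h : ι → G} {𝓢 : Set (Set X)}
    (h𝓢 : Linked 𝓢) {D : Set X} {q : X} (hD : D ∈ 𝓢) (hDq : ShrinksTo h l D q)
    (hstep : ∀ E ∈ 𝓢, ∀ t ∈ E, Tendsto (fun i => h i • t) l (𝓝 q) → ShrinksTo h l E q) :
    ∀ E ∈ 𝓢, ShrinksTo h l E q := by
  intro E hE
  have hchain := h𝓢 D hD E hE
  clear hE
  induction hchain with
  | refl => exact hDq
  | tail _ hFE ih =>
    obtain ⟨⟨t, htF, htE⟩, hE⟩ := hFE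
    exact hstep _ hE t htE (ih.tendsto htF)

theorem exists_eventuallyConst_smul_of_inv [Group G] [MulAction G X] [l.NeBot] {h : ι → G}
    {A : Set X} (hA : EventuallyConst (fun i => (h i)⁻¹ • A) l) :
    ∃ i, EventuallyConst (fun j => h j • (h i)⁻¹ • A) l := by
  obtain ⟨B, hB⟩ := eventuallyConst_iff_exists_eventuallyEq.1 hA
  replace hB : ∀ᶠ i in l, (h i)⁻¹ • A = B := hB
  obtain ⟨i, hi⟩ := hB.exists
  refine ⟨i, eventuallyConst_iff_exists_eventuallyEq.2 ⟨A, hB.mono fun j hj => ?_⟩⟩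
  change h j • (h i)⁻¹ • A = A
  rw [hi, ← hj, smul_inv_smul]

end Shrinking

/-! ### Null families and subsequences -/

section Null

variable {X : Type*} [MetricSpace X] {𝓐 : Set (Set X)}

open TopologicalSpace (NonemptyCompacts)

theorem NullFam.countable [BoundedSpace X] (hnull : NullFam 𝓐) (hnt : ∀ A ∈ 𝓐, A.Nontrivial) :
    𝓐.Countable := by
  refine (countable_iUnion fun n : ℕ =>
    (hnull (1 / ((n : ℝ) + 1)) Nat.one_div_pos_of_nat).countable).mono fun A hA => ?_
  obtain ⟨n, hn⟩ := exists_nat_one_div_lt (Metric.diam_pos (hnt A hA) (.all A))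
  exact mem_iUnion.2 ⟨n, hA, hn⟩

/-- If the limit of the sets in the Vietoris topology has two points, their diameters are bounded
below, so by nullness they range over a finite collection. -/
theorem NullFam.eventuallyConst_or_tendsto_smallSets {ι : Type*} {l : Filter ι}
    (hnull : NullFam 𝓐) {K : ι → NonemptyCompacts X} {L : NonemptyCompacts X}
    (hK : ∀ i, (K i : Set X) ∈ 𝓐) (hL : Tendsto K l (𝓝 L)) :
    EventuallyConst (fun i => (K i : Set X)) l ∨
      ∃ q, Tendsto (fun i => (K i : Set X)) l (𝓝 q).smallSets := by
  rcases (L : Set X).subsingleton_or_nontrivial with hss | ⟨a, ha, b, hb, hab⟩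
  · obtain ⟨q, hq⟩ := L.nonempty
    refine Or.inr ⟨q, tendsto_smallSets_iff.2 fun U hU => ?_⟩
    have hLU : (L : Set X) ⊆ interior U := fun x hx =>
      hss hq hx ▸ mem_interior_iff_mem_nhds.2 hU
    filter_upwards [hL ((NonemptyCompacts.isOpen_subsets_of_isOpen isOpen_interior).mem_nhds hLU)]
      with i hi
    exact hi.trans interior_subset
  · have hε : 0 < dist a b / 3 := by linarith [dist_pos.2 hab]
    set ε := dist a b / 3 with hεdef
    have hmeet : ∀ x ∈ L, ∀ᶠ i in l, (↑(K i) ∩ Metric.ball x ε).Nonempty := fun x hx =>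
      hL ((NonemptyCompacts.isOpen_inter_nonempty_of_isOpen Metric.isOpen_ball).mem_nhds
        ⟨x, hx, Metric.mem_ball_self hε⟩)
    have hbig : ∀ᶠ i in l, ε < Metric.diam (K i : Set X) := by
      filter_upwards [hmeet a ha, hmeet b hb] with i ⟨x, hx, hxa⟩ ⟨y, hy, hyb⟩
      have hxy := Metric.dist_le_diam_of_mem (K i).isCompact.isBounded hx hy
      have htri := dist_triangle4 a x y b
      rw [Metric.mem_ball] at hxa hyb
      rw [dist_comm] at hxa
      linarith
    have hfin : {M : NonemptyCompacts X | (M : Set X) ∈ {A ∈ 𝓐 | ε < Metric.diam A}}.Finite :=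
      (hnull ε hε).preimage SetLike.coe_injective.injOn
    refine Or.inl (eventuallyConst_iff_exists_eventuallyEq.2 ⟨L, ?_⟩)
    filter_upwards [hbig, hL ((hfin.sdiff (t := {L})).isClosed.isOpen_compl.mem_nhds
      fun h => h.2 rfl)] with i hi hiL
    by_contra hne
    exact hiL ⟨⟨hK i, hi⟩, fun h => hne (congrArg _ h)⟩

variable {G : Type*} [Group G] [MulAction G X] [CompactSpace X]

theorem NullFam.exists_dichotomous_subseq (hnull : NullFam 𝓐) (hclosed : ∀ A ∈ 𝓐, IsClosed A)
    (hnt : ∀ A ∈ 𝓐, A.Nontrivial) (hinv : ∀ g : G, ∀ A ∈ 𝓐, g • A ∈ 𝓐) (g : ℕ → G) :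
    ∃ φ : ℕ → ℕ, StrictMono φ ∧ Dichotomous 𝓐 (fun i => g (φ i)) atTop := by
  have : Countable 𝓐 := (hnull.countable hnt).to_subtype
  let K : ℕ → 𝓐 → NonemptyCompacts X := fun i A =>
    ⟨⟨g i • A, (hclosed _ (hinv _ A A.2)).isCompact⟩, (hnt _ (hinv _ A A.2)).nonempty⟩
  obtain ⟨L, φ, hφ, hL⟩ := CompactSpace.tendsto_subseq K
  exact ⟨φ, hφ, fun A hA => hnull.eventuallyConst_or_tendsto_smallSets
    (fun i => hinv (g (φ i)) A hA) (tendsto_pi_nhds.1 hL ⟨A, hA⟩)⟩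

theorem NullFam.exists_dichotomous_inv_subseq (hnull : NullFam 𝓐)
    (hclosed : ∀ A ∈ 𝓐, IsClosed A) (hnt : ∀ A ∈ 𝓐, A.Nontrivial)
    (hinv : ∀ g : G, ∀ A ∈ 𝓐, g • A ∈ 𝓐) (g : ℕ → G) : ∃ φ : ℕ → ℕ, StrictMono φ ∧
      Dichotomous 𝓐 (fun i => g (φ i)) atTop ∧ Dichotomous 𝓐 (fun i => (g (φ i))⁻¹) atTop := by
  obtain ⟨φ, hφ, hd⟩ := hnull.exists_dichotomous_subseq hclosed hnt hinv g
  obtain ⟨ψ, hψ, hd'⟩ := hnull.exists_dichotomous_subseq hclosed hnt hinv fun i => (g (φ i))⁻¹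
  exact ⟨φ ∘ ψ, hφ.comp hψ, hd.comp hψ.tendsto_atTop, hd'⟩

end Null

/-! ### Convergence dynamics -/

section Dynamics

variable {G X : Type*} [Group G] [MulAction G X] [TopologicalSpace X] [T3Space X]
  [LocallyConnectedSpace X] [ContinuousConstSMul G X] {ι : Type*} {l : Filter ι} {h : ι → G}
  {𝓐 𝓢 : Set (Set X)}

/-- Otherwise the limits `x₁` and `y₁` are joined by a connected set away from `q`; its preimages
under `h i` avoid the shield and eventually join a neighbourhood of `p` to `Y`. -/
theorem IsShield.eq_or_eq_of_tendsto [l.NeBot] (hcut : ∀ x : X, IsPreconnected ({x}ᶜ : Set X))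
    {p q : X} {Y : Set X} (h𝓢 : IsShield 𝓢 p Y) (hclosed : ∀ D ∈ 𝓢, IsClosed D)
    (hshrink : ∀ D ∈ 𝓢, ShrinksTo h l D q) {x y : ι → X} {x₁ y₁ : X}
    (hx : Tendsto x l (𝓝 p)) (hy : ∀ᶠ i in l, y i ∈ Y)
    (hx₁ : Tendsto (fun i => h i • x i) l (𝓝 x₁)) (hy₁ : Tendsto (fun i => h i • y i) l (𝓝 y₁)) :
    x₁ = q ∨ y₁ = q := by
  by_contra! hne
  obtain ⟨R, oR, cR, hxR, hyR, hRq⟩ :=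
    exists_isOpen_isPreconnected_mem_mem isOpen_compl_singleton (hcut q) hne.1 hne.2
  obtain ⟨j, hj⟩ := hy.exists
  obtain ⟨N, oN, cN, hpN, hN⟩ := exists_isOpen_isPreconnected_closure_subset
    ((isClosed_sUnion_of_finite h𝓢.finite hclosed).isOpen_compl.mem_nhds (h𝓢.sep _ hj).1)
  have hR : ∀ᶠ i in l, ∀ D ∈ 𝓢, h i • D ⊆ (closure R)ᶜ :=
    (eventually_all_finite h𝓢.finite).2 fun D hD => tendsto_smallSets_iff.1 (hshrink D hD) _
      (isClosed_closure.isOpen_compl.mem_nhds fun hq => hRq hq rfl)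
  obtain ⟨i, hiR, hxN, hyY, hxi, hyi⟩ := (hR.and <| (hx.eventually_mem (oN.mem_nhds hpN)).and <|
    hy.and <| (hx₁.eventually_mem (oR.mem_nhds hxR)).and
      (hy₁.eventually_mem (oR.mem_nhds hyR))).exists
  have cRN : IsPreconnected ((h i)⁻¹ • R ∪ N) :=
    (cR.image _ (continuous_const_smul _).continuousOn).union (x i)
      (mem_inv_smul_set_iff.2 hxi) hxN cN
  obtain ⟨z, hz | hz, D, hD, hzD⟩ := (sepPts_iff.1 (h𝓢.sep _ hyY)).2.2 _ cRN (Or.inr hpN)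
    (Or.inl (mem_inv_smul_set_iff.2 hyi))
  · exact hiR D hD (smul_mem_smul_set hzD) (subset_closure (mem_inv_smul_set_iff.1 hz))
  · exact hN (subset_closure hz) ⟨D, hD, hzD⟩

/-- The shield is taken between `x` and a neighbourhood of `y`. -/
theorem HasShields.exists_shrinksTo_eq_or_eq [PreconnectedSpace X] [l.NeBot] (h𝓐 : HasShields 𝓐)
    (hcut : ∀ x : X, IsPreconnected ({x}ᶜ : Set X)) (hclosed : ∀ A ∈ 𝓐, IsClosed A)
    (hshrink : ∀ A ∈ 𝓐, ∃ q, ShrinksTo h l A q) {x y : X} (hxy : x ≠ y) :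
    ∃ D ∈ 𝓐, ∃ q, ShrinksTo h l D q ∧ ∀ (u v : ι → X) (u₁ v₁ : X),
      Tendsto u l (𝓝 x) → Tendsto v l (𝓝 y) → Tendsto (fun i => h i • u i) l (𝓝 u₁) →
      Tendsto (fun i => h i • v i) l (𝓝 v₁) → u₁ = q ∨ v₁ = q := by
  obtain ⟨Y, oY, cY, hyY, hYx⟩ := exists_isOpen_isPreconnected_closure_subset
    (isOpen_compl_singleton.mem_nhds hxy.symm)
  obtain ⟨𝓢, h𝓢𝓐, h𝓢⟩ := h𝓐 x Y cY ⟨y, hyY⟩ fun hx => hYx hx rfl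
  obtain ⟨-, -, D, hD, -⟩ := (sepPts_iff.1 (h𝓢.sep y hyY)).2.2 univ isPreconnected_univ
    (mem_univ x) (mem_univ y)
  obtain ⟨q, hq⟩ := hshrink D (h𝓢𝓐 hD)
  have hall : ∀ E ∈ 𝓢, ShrinksTo h l E q := by
    refine h𝓢.linked.shrinksTo hD hq fun E hE t ht htq => ?_
    obtain ⟨q', hq'⟩ := hshrink E (h𝓢𝓐 hE)
    rwa [tendsto_nhds_unique htq (hq'.tendsto ht)]
  exact ⟨D, h𝓢𝓐 hD, q, hq, fun u v u₁ v₁ hu hv => h𝓢.eq_or_eq_of_tendsto hcut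
    (fun E hE => hclosed E (h𝓢𝓐 hE)) hall hu (hv.eventually_mem (oY.mem_nhds hyY))⟩

theorem HasShields.exists_forall_shrinksTo [PreconnectedSpace X] [Nonempty X] [l.NeBot]
    (h𝓐 : HasShields 𝓐) (hcut : ∀ x : X, IsPreconnected ({x}ᶜ : Set X))
    (hclosed : ∀ A ∈ 𝓐, IsClosed A) (hnt : ∀ A ∈ 𝓐, A.Nontrivial)
    (hshrink : ∀ A ∈ 𝓐, ∃ q, ShrinksTo h l A q)
    (hshrink' : ∀ A ∈ 𝓐, ∃ q, ShrinksTo (fun i => (h i)⁻¹) l A q) :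
    ∃ q, ∀ A ∈ 𝓐, ShrinksTo h l A q := by
  have huniq : ∀ A ∈ 𝓐, ∀ B ∈ 𝓐, ∀ x y, ShrinksTo h l A x → ShrinksTo h l B y → x = y := by
    intro A hA B hB x y hx hy
    by_contra hxy
    obtain ⟨-, -, q, -, hq⟩ := h𝓐.exists_shrinksTo_eq_or_eq hcut hclosed hshrink' hxy
    obtain ⟨a, ha, haq⟩ := (hnt A hA).exists_ne q
    obtain ⟨b, hb, hbq⟩ := (hnt B hB).exists_ne q
    exact (hq _ _ a b (hx.tendsto ha) (hy.tendsto hb) (by simp) (by simp)).elim haq hbq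
  obtain rfl | ⟨A, hA⟩ := 𝓐.eq_empty_or_nonempty
  · exact ⟨Classical.arbitrary X, by simp⟩
  obtain ⟨q, hq⟩ := hshrink A hA
  refine ⟨q, fun B hB => ?_⟩
  obtain ⟨q', hq'⟩ := hshrink B hB
  rwa [huniq A hA B hB q q' hq hq']

theorem HasShields.exists_convSeqOn_of_shrinksTo [PreconnectedSpace X] [Nonempty X]
    [CompactSpace X] [FirstCountableTopology X] {g : ℕ → G}
    (h𝓐 : HasShields 𝓐) (hcut : ∀ x : X, IsPreconnected ({x}ᶜ : Set X))
    (hclosed : ∀ A ∈ 𝓐, IsClosed A) (hnt : ∀ A ∈ 𝓐, A.Nontrivial)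
    (hshrink : ∀ A ∈ 𝓐, ∃ q, ShrinksTo g atTop A q)
    (hshrink' : ∀ A ∈ 𝓐, ∃ q, ShrinksTo (fun i => (g i)⁻¹) atTop A q) :
    ∃ k : ℕ → ℕ, StrictMono k ∧ ∃ n p : X, ConvSeqOn univ (fun i => (g (k i) • ·)) n p := by
  obtain ⟨n, hn⟩ := h𝓐.exists_forall_shrinksTo hcut hclosed hnt hshrink' (by simpa using hshrink)
  obtain ⟨d, hd⟩ : ∃ d : X, ∀ c, c ≠ n → d ≠ n := by
    by_cases h : ∃ d : X, d ≠ n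
    · exact h.imp fun d hd _ _ => hd
    · exact ⟨n, fun c hc => absurd ⟨c, hc⟩ h⟩
  obtain ⟨p, k, hk, hp⟩ := CompactSpace.tendsto_subseq fun i => g i • d
  refine ⟨k, hk, n, p, convSeqOn_univ_of_forall fun φ hφ c c₀ c₁ hc₀ hc hc₁ => ?_⟩
  by_contra hne
  have hkφ : Tendsto (k ∘ φ) atTop atTop := hk.tendsto_atTop.comp hφ.tendsto_atTop
  obtain ⟨D, hD, q, hDq, hq⟩ := h𝓐.exists_shrinksTo_eq_or_eq hcut hclosed
    (fun A hA => ⟨n, (hn A hA).comp hkφ⟩) (Ne.symm hne)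
  obtain ⟨t, ht⟩ := (hnt D hD).nonempty
  obtain rfl : q = n := tendsto_nhds_unique (hDq.tendsto ht) (((hn D hD).tendsto ht).comp hkφ)
  exact (hq _ _ d c₀ (hp.comp hφ.tendsto_atTop) hc₁ (by simp) (by simpa using hc)).elim
    (hd c₀ hc₀) hc₀

/-- A shield between `n` and a connected set joining `A` to `c₀` meets `A`. The member meeting `A`
is pulled to `p`, since `A` is, and hence so are all members. -/
theorem HasShields.eq_attractor_of_tendsto {g : ℕ → G} (h𝓐 : HasShields 𝓐)
    (hcut : ∀ x : X, IsPreconnected ({x}ᶜ : Set X)) (hclosed : ∀ A ∈ 𝓐, IsClosed A)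
    (hd : Dichotomous 𝓐 g atTop) {A : Set X} (hA : IsCompact A) (cA : IsPreconnected A)
    (hnt : A.Nontrivial) (hgA : ∀ i, g i • A = A) {n p m : X} (hconv : ConvSeqOn A (g · • ·) n p)
    (hm : Tendsto (fun i => (g i)⁻¹ • p) atTop (𝓝 m)) {c : ℕ → X} {c₀ c₁ : X} (hc₀ : c₀ ≠ n)
    (hc : Tendsto c atTop (𝓝 c₀)) (hc₁ : Tendsto (fun i => g i • c i) atTop (𝓝 c₁)) : c₁ = p := by
  obtain ⟨a, haA, han⟩ := hnt.exists_ne n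
  obtain ⟨b, hbA, hbp⟩ := hnt.exists_ne p
  obtain ⟨R, oR, cR, hKR, hRn⟩ := exists_isOpen_isPreconnected_superset isOpen_compl_singleton
    (hcut n) ((({c₀, a, m} : Set X).toFinite.subset sdiff_subset).isCompact (s := _ \ {n}))
    fun x hx => hx.2
  have hc₀R : c₀ ∈ R := hKR ⟨by simp, hc₀⟩
  have haR : a ∈ R := hKR ⟨by simp, han⟩
  obtain ⟨𝓢, h𝓢𝓐, h𝓢⟩ := h𝓐 n R cR ⟨a, haR⟩ fun hn => hRn hn rfl
  have hm𝓢 : m ∉ ⋃₀ 𝓢 := by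
    by_cases hmn : m = n
    · exact hmn ▸ (h𝓢.sep a haR).1
    · exact (h𝓢.sep m (hKR ⟨by simp, hmn⟩)).2.1
  have hstep : ∀ E ∈ 𝓢, ∀ t ∈ E, Tendsto (fun i => g i • t) atTop (𝓝 p) → ShrinksTo g atTop E p :=
    fun E hE t ht htp => hd.shrinksTo_of_tendsto (h𝓢𝓐 hE) (hclosed E (h𝓢𝓐 hE)) ht htp hm
      fun hmE => hm𝓢 ⟨E, hE, hmE⟩
  obtain ⟨t, htA, D, hD, htD⟩ := (sepPts_iff.1 (h𝓢.sep a haR)).2.2 A cA hconv.1 haA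
  have htn : t ≠ n := fun htn => (h𝓢.sep a haR).1 ⟨D, hD, htn ▸ htD⟩
  have hall : ∀ E ∈ 𝓢, ShrinksTo g atTop E p :=
    h𝓢.linked.shrinksTo hD (hstep D hD t htD (hconv.tendsto htA htn)) hstep
  exact (h𝓢.eq_or_eq_of_tendsto hcut (fun E hE => hclosed E (h𝓢𝓐 hE)) hall
    (hconv.tendsto_inv_smul hA hgA hbA hbp) (hc.eventually_mem (oR.mem_nhds hc₀R))
    (x₁ := b) (by simp) hc₁).resolve_left hbp

variable [CompactSpace X] [FirstCountableTopology X] {A : Set X} {g : ℕ → G}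

theorem HasShields.exists_convSeqOn_of_smul_eq (h𝓐 : HasShields 𝓐)
    (hcut : ∀ x : X, IsPreconnected ({x}ᶜ : Set X)) (hclosed : ∀ A ∈ 𝓐, IsClosed A)
    (hd : Dichotomous 𝓐 g atTop) (hA : IsClosed A) (cA : IsPreconnected A) (hnt : A.Nontrivial)
    (hgA : ∀ i, g i • A = A) {n p : X} (hconv : ConvSeqOn A (g · • ·) n p) :
    ∃ k : ℕ → ℕ, StrictMono k ∧ ConvSeqOn univ (fun i => (g (k i) • ·)) n p := by
  obtain ⟨m, k, hk, hm⟩ := CompactSpace.tendsto_subseq fun i => (g i)⁻¹ • p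
  refine ⟨k, hk, convSeqOn_univ_of_forall fun φ hφ c c₀ c₁ hc₀ hc hc₁ => ?_⟩
  have hkφ : Tendsto (k ∘ φ) atTop atTop := hk.tendsto_atTop.comp hφ.tendsto_atTop
  exact h𝓐.eq_attractor_of_tendsto hcut hclosed (hd.comp hkφ) hA.isCompact cA hnt
    (fun i => hgA _) (hconv.comp hkφ) (hm.comp hφ.tendsto_atTop) hc₀ hc hc₁

/-- From some `N` on, `(g N)⁻¹ * g (i + N)` stabilises `A`. -/
theorem HasShields.exists_convSeqOn_of_eventuallyConst (h𝓐 : HasShields 𝓐)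
    (hcut : ∀ x : X, IsPreconnected ({x}ᶜ : Set X)) (hclosed : ∀ A ∈ 𝓐, IsClosed A)
    (hd : Dichotomous 𝓐 g atTop) (hA : IsClosed A) (cA : IsPreconnected A) (hnt : A.Nontrivial)
    (hstab : ConvGroupOn (stab G A) A) (hg : g.Injective)
    (hgA : EventuallyConst (fun i => g i • A) atTop) :
    ∃ k : ℕ → ℕ, StrictMono k ∧ ∃ n p : X, ConvSeqOn univ (fun i => (g (k i) • ·)) n p := by
  obtain ⟨N, hN⟩ := eventuallyConst_atTop.1 hgA
  let f : ℕ → G := fun i => (g N)⁻¹ * g (i + N)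
  have hfA : ∀ i, f i • A = A := fun i => by
    simp only [f, mul_smul, hN (i + N) (Nat.le_add_left N i), inv_smul_smul]
  have hf : f.Injective :=
    (mul_right_injective _).comp (hg.comp (add_left_injective N))
  obtain ⟨k, hk, n, p, hconv⟩ := hstab f hfA hf
  have hdf : Dichotomous 𝓐 (fun i => f (k i)) atTop :=
    (hd.comp ((tendsto_add_atTop_nat N).comp hk.tendsto_atTop)).const_mul (g N)⁻¹
  obtain ⟨k', hk', hconv'⟩ :=
    h𝓐.exists_convSeqOn_of_smul_eq hcut hclosed hdf hA cA hnt (fun i => hfA (k i)) hconv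
  refine ⟨fun i => k (k' i) + N, (hk.comp hk').add_const N, n, g N • p, ?_⟩
  simpa [f, mul_smul] using hconv'.const_smul (g N)

end Dynamics

theorem HasShields.convGroupOn_univ {G X : Type*} [Group G] [MulAction G X] [MetricSpace X]
    [CompactSpace X] [ConnectedSpace X] [LocallyConnectedSpace X] [ContinuousConstSMul G X]
    {𝓐 : Set (Set X)} (h𝓐 : HasShields 𝓐) (hcut : ∀ x : X, IsPreconnected ({x}ᶜ : Set X))
    (hclosed : ∀ A ∈ 𝓐, IsClosed A) (hconn : ∀ A ∈ 𝓐, IsPreconnected A)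
    (hnt : ∀ A ∈ 𝓐, A.Nontrivial) (hinv : ∀ g : G, ∀ A ∈ 𝓐, g • A ∈ 𝓐) (hnull : NullFam 𝓐)
    (hstab : ∀ A ∈ 𝓐, ConvGroupOn (stab G A) A) :
    ConvGroupOn (univ : Set G) (univ : Set X) := by
  intro g _ hg
  obtain ⟨φ, hφ, hd, hd'⟩ := hnull.exists_dichotomous_inv_subseq hclosed hnt hinv g
  suffices ∃ k : ℕ → ℕ, StrictMono k ∧ ∃ n p : X,
      ConvSeqOn univ (fun i => (g (φ (k i)) • ·)) n p by
    obtain ⟨k, hk, n, p, hconv⟩ := this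
    exact ⟨φ ∘ k, hφ.comp hk, n, p, hconv⟩
  by_cases hconst : ∃ A ∈ 𝓐, EventuallyConst (fun i => g (φ i) • A) atTop
  · obtain ⟨A, hA, hgA⟩ := hconst
    exact h𝓐.exists_convSeqOn_of_eventuallyConst hcut hclosed hd (hclosed A hA) (hconn A hA)
      (hnt A hA) (hstab A hA) (hg.comp hφ.injective) hgA
  · push Not at hconst
    refine h𝓐.exists_convSeqOn_of_shrinksTo hcut hclosed hnt
      (fun A hA => (hd A hA).resolve_left (hconst A hA)) fun A hA =>
        (hd' A hA).resolve_left fun hconst' => ?_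
    obtain ⟨i, hi⟩ := exists_eventuallyConst_smul_of_inv hconst'
    exact hconst _ (hinv _ A hA) hi

/-- Main Theorem: bootstrapping for convergence groups acting on a Peano continuum
without cut points admitting no essential map to the circle. -/
theorem bootstrap_main {G X : Type*} [Group G] [MulAction G X]
    [MetricSpace X] [CompactSpace X] [ConnectedSpace X] [LocallyConnectedSpace X]
    [ContinuousConstSMul G X]
    (hcut : ∀ x : X, IsPreconnected ({x}ᶜ : Set X))
    (hcirc : ∀ f : C(X, Circle), f.Nullhomotopic)
    (𝓐 : Set (Set X))
    (hclosed : ∀ A ∈ 𝓐, IsClosed A)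
    (hconn : ∀ A ∈ 𝓐, IsConnected A)
    (hinv : ∀ g : G, ∀ A ∈ 𝓐, g • A ∈ 𝓐)
    (hnull : NullFam 𝓐) (hfine : FineFam 𝓐)
    (hstab : ∀ A ∈ 𝓐, ConvGroupOn (stab G A) A) :
    ConvGroupOn (Set.univ : Set G) (Set.univ : Set X) := by
  have hX : Unicoherent X := unicoherent_of_nullhomotopic hcirc
  exact (hasShields_setOf_nontrivial hX hcut hclosed hnull hfine).convGroupOn_univ hcut
    (fun A hA => hclosed A hA.1) (fun A hA => (hconn A hA.1).isPreconnected) (fun A hA => hA.2)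
    (fun g A hA => ⟨hinv g A hA.1, hA.2.image (MulAction.injective g)⟩)
    (fun ε hε => (hnull ε hε).subset fun A hA => ⟨hA.1.1, hA.2⟩) fun A hA => hstab A hA.1
end

section
/- Let X be a Peano continuum without cut points, and let (G, 𝓐) be a fine pairing on X. If, for each A ∈ 𝓐, the stabilizer st(A) = {g ∈ G : g(A) = A} acts as a convergence group on X, then G acts as a convergence group on X. -/
open Set Filter Topology Pointwise

/-! Let `g` be a sequence of distinct elements of `G`. If some `A ∈ 𝓐` has the same image under
infinitely many `g i`, then along those indices `g` stays in one coset of the stabilizer of `A`,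
and `st(A)` being a convergence group suffices. Otherwise nullness forces the diameters of the
translates `g i • A` to tend to zero for every `A ∈ 𝓐`, and along a subsequence the translates of
one member shrink to a point `p`.

As `p` is not a cut point, the complement of any neighborhood of `p` lies in a connected set staying
away from `p`; a set `E` close enough to `p` is disjoint from that connected set, so all components
of `Eᶜ` but one are near `p`. Hence if the translates of `A` shrink to `p`, so do those of any `B`
crossing `A`, and by cross-connectedness the translates of all members of `𝓐` do. Fineness then
shows that `g` carries one of any two distinct points, along with a neighborhood, to `p`. So if some
point `n` resists, then along a subsequence every other point is carried to `p`, locally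
uniformly. -/

section Connectedness

variable {X : Type*} [TopologicalSpace X]

lemma exists_mem_nhds_isPreconnected_closure_subset [RegularSpace X] [LocallyConnectedSpace X]
    {x : X} {U : Set X} (hU : U ∈ 𝓝 x) :
    ∃ N ∈ 𝓝 x, IsPreconnected N ∧ closure N ⊆ U := by
  obtain ⟨F, hF, hFclosed, hFU⟩ := exists_mem_nhds_isClosed_subset hU
  exact ⟨connectedComponentIn F x, connectedComponentIn_mem_nhds hF,
    isPreconnected_connectedComponentIn,
    (closure_minimal (connectedComponentIn_subset F x) hFclosed).trans hFU⟩

lemma exists_isPreconnected_closure_subset_of_mem [RegularSpace X] [LocallyConnectedSpace X]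
    {S : Set X} (hS : IsPreconnected S) (hSopen : IsOpen S) {x y : X} (hx : x ∈ S) (hy : y ∈ S) :
    ∃ C, IsPreconnected C ∧ closure C ⊆ S ∧ x ∈ C ∧ y ∈ C := by
  refine hS.induction₂ (fun x y ↦ ∃ C, IsPreconnected C ∧ closure C ⊆ S ∧ x ∈ C ∧ y ∈ C)
    ?_ ?_ ?_ hx hy
  · intro z hz
    obtain ⟨N, hN, hNconn, hNS⟩ :=
      exists_mem_nhds_isPreconnected_closure_subset (hSopen.mem_nhds hz)
    filter_upwards [mem_nhdsWithin_of_mem_nhds hN] with w hw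
    exact ⟨N, hNconn, hNS, mem_of_mem_nhds hN, hw⟩
  · rintro a b c - - - ⟨C, hC, hCS, ha, hb⟩ ⟨D, hD, hDS, hb', hc⟩
    exact ⟨C ∪ D, hC.union b hb hb' hD, closure_union.subset.trans (union_subset hCS hDS),
      .inl ha, .inr hc⟩
  · rintro a b - - ⟨C, hC, hCS, ha, hb⟩
    exact ⟨C, hC, hCS, hb, ha⟩

lemma exists_isPreconnected_superset_closure_subset [RegularSpace X] [LocallyConnectedSpace X]
    {S K : Set X} (hS : IsPreconnected S) (hSopen : IsOpen S) (hK : IsCompact K) (hKS : K ⊆ S) :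
    ∃ C, IsPreconnected C ∧ K ⊆ C ∧ closure C ⊆ S := by
  rcases S.eq_empty_or_nonempty with rfl | ⟨q, hq⟩
  · exact ⟨∅, isPreconnected_empty, hKS, closure_empty.subset⟩
  suffices ∃ C, IsPreconnected C ∧ q ∈ C ∧ K ⊆ C ∧ closure C ⊆ S from
    this.imp fun C ⟨hC, _, hKC, hCS⟩ ↦ ⟨hC, hKC, hCS⟩
  refine hK.induction_on (p := fun K ↦ ∃ C, IsPreconnected C ∧ q ∈ C ∧ K ⊆ C ∧ closure C ⊆ S)
    ?_ ?_ ?_ ?_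
  · obtain ⟨C, hC, hCS, hqC, -⟩ := exists_isPreconnected_closure_subset_of_mem hS hSopen hq hq
    exact ⟨C, hC, hqC, empty_subset C, hCS⟩
  · rintro s t hst ⟨C, hC, hqC, htC, hCS⟩
    exact ⟨C, hC, hqC, hst.trans htC, hCS⟩
  · rintro s t ⟨C, hC, hqC, hsC, hCS⟩ ⟨D, hD, hqD, htD, hDS⟩
    exact ⟨C ∪ D, hC.union q hqC hqD hD, .inl hqC, union_subset_union hsC htD,
      closure_union.subset.trans (union_subset hCS hDS)⟩
  · intro y hy
    obtain ⟨C, hC, hCS, hqC, hyC⟩ :=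
      exists_isPreconnected_closure_subset_of_mem hS hSopen hq (hKS hy)
    obtain ⟨N, hN, hNconn, hNS⟩ :=
      exists_mem_nhds_isPreconnected_closure_subset (hSopen.mem_nhds (hKS hy))
    exact ⟨N, mem_nhdsWithin_of_mem_nhds hN, C ∪ N, hC.union y hyC (mem_of_mem_nhds hN) hNconn,
      .inl hqC, subset_union_right,
      closure_union.subset.trans (union_subset hCS hNS)⟩

lemma connectedComponentIn_eq_of_inter_isPreconnected_nonempty {C F : Set X} {x y : X}
    (hC : IsPreconnected C) (hCF : C ⊆ F) (hx : (connectedComponentIn F x ∩ C).Nonempty)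
    (hy : (connectedComponentIn F y ∩ C).Nonempty) :
    connectedComponentIn F x = connectedComponentIn F y := by
  obtain ⟨u, hux, huC⟩ := hx
  obtain ⟨v, hvy, hvC⟩ := hy
  rw [connectedComponentIn_eq hux, connectedComponentIn_eq hvy,
    connectedComponentIn_eq (hC.subset_connectedComponentIn huC hCF hvC)]

variable [CompactSpace X] [T2Space X] [LocallyConnectedSpace X] {p : X} {U : Set X}

lemma eventually_smallSets_connectedComponentIn_subset (hp : IsPreconnected {p}ᶜ)
    (hU : U ∈ 𝓝 p) :
    ∀ᶠ E in (𝓝 p).smallSets, ∀ x y, SepPts E x y →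
      connectedComponentIn Eᶜ x ⊆ U ∨ connectedComponentIn Eᶜ y ⊆ U := by
  obtain ⟨C, hC, hUC, hCp⟩ := exists_isPreconnected_superset_closure_subset hp
    isOpen_compl_singleton isOpen_interior.isClosed_compl.isCompact
    (compl_subset_compl.2 (singleton_subset_iff.2 (mem_interior_iff_mem_nhds.2 hU)))
  have hCU : ∀ {F : Set X}, ¬ F ⊆ U → (F ∩ C).Nonempty := fun hF ↦
    let ⟨z, hzF, hzU⟩ := not_subset.1 hF
    ⟨z, hzF, hUC fun hz ↦ hzU (interior_subset hz)⟩
  have hVp : (closure C)ᶜ ∈ 𝓝 p :=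
    isClosed_closure.isOpen_compl.mem_nhds fun hpC ↦ hCp hpC rfl
  filter_upwards [eventually_smallSets_subset.2 hVp] with E hE x y hxy
  have hCE : C ⊆ Eᶜ := subset_closure.trans (subset_compl_comm.1 hE)
  by_contra! h
  exact hxy.2.2
    (connectedComponentIn_eq_of_inter_isPreconnected_nonempty hC hCE (hCU h.1) (hCU h.2))

lemma eventually_smallSets_inter_nonempty_of_crosses (hp : IsPreconnected {p}ᶜ)
    (hU : U ∈ 𝓝 p) :
    ∀ᶠ E in (𝓝 p).smallSets, ∀ B, Crosses E B → (B ∩ U).Nonempty := by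
  filter_upwards [eventually_smallSets_subset.2 hU,
    eventually_smallSets_connectedComponentIn_subset hp hU] with E hEU hE B hEB
  rcases hEB with ⟨z, hzE, hzB⟩ | ⟨⟨hBE, x, hx, y, hy, hxy⟩, -⟩
  · exact ⟨z, hzB, hEU hzE⟩
  · rcases hE x y ⟨hBE hx, hBE hy, hxy⟩ with h | h
    · exact ⟨x, hx, h (mem_connectedComponentIn (hBE hx))⟩
    · exact ⟨y, hy, h (mem_connectedComponentIn (hBE hy))⟩

end Connectedness

section Families

variable {X : Type*}

lemma CrossSeqFromTo.induction [TopologicalSpace X] {𝓐 : Set (Set X)} {A B : Set X}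
    {P : Set X → Prop} (h : CrossSeqFromTo 𝓐 A B) (hA : P A)
    (hstep : ∀ C ∈ 𝓐, ∀ D ∈ 𝓐, Crosses C D → P C → P D) : P B := by
  obtain ⟨n, c, rfl, rfl, hc, hcross⟩ := h
  suffices ∀ m ≤ n, P (c m) from this n le_rfl
  intro m hm
  induction m with
  | zero => exact hA
  | succ m ih =>
    exact hstep _ (hc m (by lia)) _ (hc _ hm) (hcross m (by lia)) (ih (by lia))

variable [PseudoMetricSpace X] {ι : Type*} {l : Filter ι} {s : ι → Set X}

lemma NullFam.tendsto_diam {𝓐 : Set (Set X)} (h𝓐 : NullFam 𝓐) (hs : ∀ i, s i ∈ 𝓐)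
    (hcofinite : Tendsto s l cofinite) : Tendsto (fun i ↦ Metric.diam (s i)) l (𝓝 0) := by
  refine tendsto_order.2 ⟨fun a ha ↦ .of_forall fun i ↦ ha.trans_le Metric.diam_nonneg,
    fun ε hε ↦ ?_⟩
  filter_upwards [hcofinite.eventually (h𝓐 (ε / 2) (half_pos hε)).eventually_cofinite_notMem]
    with i hi
  exact (not_lt.1 fun h ↦ hi ⟨hs i, h⟩).trans_lt (half_lt_self hε)

lemma tendsto_smallSets_nhds_of_tendsto_diam {p : X} (hs : ∀ i, Bornology.IsBounded (s i))
    (hdiam : Tendsto (fun i ↦ Metric.diam (s i)) l (𝓝 0))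
    (hmeet : ∀ U ∈ 𝓝 p, ∀ᶠ i in l, (s i ∩ U).Nonempty) :
    Tendsto s l (𝓝 p).smallSets := by
  refine (Metric.nhds_basis_ball.smallSets.tendsto_right_iff).2 fun ε hε ↦ ?_
  filter_upwards [hdiam.eventually_lt_const (half_pos hε),
    hmeet _ (Metric.ball_mem_nhds p (half_pos hε))] with i hi ⟨b, hb, hbp⟩ z hz
  calc dist z p ≤ dist z b + dist b p := dist_triangle z b p
    _ < ε / 2 + ε / 2 :=
      add_lt_add ((Metric.dist_le_diam_of_mem (hs i) hz hb).trans_lt hi) hbp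
    _ = ε := add_halves ε

end Families

section ConvergenceSequences

variable {X : Type*} [TopologicalSpace X]

/-- The sequence `f` of self-maps of `X` has a subsequence acting as a convergence sequence on `X`,
as in the conclusion of `ConvGroupOn`. -/
def HasConvSubseq (f : ℕ → X → X) : Prop :=
  ∃ k : ℕ → ℕ, StrictMono k ∧ ∃ n p : X, ConvSeqOn univ (fun i ↦ f (k i)) n p

/-- The maps `f i` collapse pairs to `p` along `l`: of any two distinct points, one is carried to
`p`, uniformly near the two points. Which of the two is carried may depend on the index and on
the pair of nearby points. -/
def CollapsesPairs {ι : Type*} (f : ι → X → X) (l : Filter ι) (p : X) : Prop :=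
  ∀ x y, x ≠ y → ∀ W ∈ 𝓝 p,
    ∀ᶠ q : ι × X × X in l ×ˢ 𝓝 x ×ˢ 𝓝 y, f q.1 q.2.1 ∈ W ∨ f q.1 q.2.2 ∈ W

lemma HasConvSubseq.of_comp {f : ℕ → X → X} {φ : ℕ → ℕ} (hφ : StrictMono φ)
    (h : HasConvSubseq fun i ↦ f (φ i)) : HasConvSubseq f :=
  let ⟨k, hk, n, p, hconv⟩ := h
  ⟨φ ∘ k, hφ.comp hk, n, p, hconv⟩

lemma HasConvSubseq.continuous_comp {f : ℕ → X → X} (hf : HasConvSubseq f) {h : X → X}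
    (hh : Continuous h) : HasConvSubseq fun i ↦ h ∘ f i := by
  obtain ⟨k, hk, n, p, -, -, hconv⟩ := hf
  refine ⟨k, hk, n, h p, mem_univ n, mem_univ (h p), fun C hC hCcomp hn U hU hp ↦ ?_⟩
  filter_upwards [hconv C hC hCcomp hn (h ⁻¹' U) (hU.preimage hh) hp] with i hi
  rw [image_comp]
  exact image_subset_iff.2 hi

lemma convSeqOn_univ_of_tendsto {f : ℕ → X → X} {n p : X}
    (h : ∀ y ≠ n, Tendsto (fun q : ℕ × X ↦ f q.1 q.2) (atTop ×ˢ 𝓝 y) (𝓝 p)) :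
    ConvSeqOn univ f n p := by
  refine ⟨mem_univ n, mem_univ p, fun C _ hC hn U hU hp ↦ ?_⟩
  have hev : ∀ᶠ q : ℕ × X in atTop ×ˢ 𝓝ˢ C, f q.1 q.2 ∈ U :=
    hC.mem_prod_nhdsSet_of_forall fun y hy ↦
      h y (ne_of_mem_of_not_mem hy hn) (hU.mem_nhds hp)
  filter_upwards [hev.curry] with i hi
  exact image_subset_iff.2 (subset_of_mem_nhdsSet hi)

lemma CollapsesPairs.hasConvSubseq [FirstCountableTopology X] {f : ℕ → X → X} {p : X}
    (hf : CollapsesPairs f atTop p) : HasConvSubseq f := by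
  by_cases hall : ∀ y, Tendsto (fun q : ℕ × X ↦ f q.1 q.2) (atTop ×ˢ 𝓝 y) (𝓝 p)
  · exact ⟨id, strictMono_id, p, p, convSeqOn_univ_of_tendsto fun y _ ↦ hall y⟩
  obtain ⟨n, W₀, hW₀, hbad⟩ : ∃ n, ∃ W₀ ∈ 𝓝 p,
      ∃ᶠ q : ℕ × X in atTop ×ˢ 𝓝 n, f q.1 q.2 ∉ W₀ := by
    simpa only [tendsto_iff_forall_eventually_mem, not_forall, exists_prop, not_eventually]
      using hall
  obtain ⟨u, hu, hubad⟩ := exists_seq_forall_of_frequently hbad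
  obtain ⟨φ, hφ, hk⟩ := strictMono_subseq_of_tendsto_atTop (tendsto_fst.comp hu)
  refine ⟨_, hk, n, p, convSeqOn_univ_of_tendsto fun y hy ↦
    tendsto_iff_forall_eventually_mem.2 fun W hW ↦ ?_⟩
  have hlim : Tendsto (fun q : ℕ × X ↦ ((u (φ q.1)).1, (u (φ q.1)).2, q.2))
      (atTop ×ˢ 𝓝 y) (atTop ×ˢ 𝓝 n ×ˢ 𝓝 y) :=
    have huφ := hu.comp (hφ.tendsto_atTop.comp tendsto_fst)
    (tendsto_fst.comp huφ).prodMk ((tendsto_snd.comp huφ).prodMk tendsto_snd)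
  filter_upwards [hlim.eventually (hf n y hy.symm _ (inter_mem hW₀ hW))] with q hq
  exact (hq.resolve_left fun h ↦ hubad _ h.1).2

end ConvergenceSequences

section Actions

variable {G X : Type*} [Group G] [MulAction G X]

section Equivariance

variable [TopologicalSpace X] [ContinuousConstSMul G X] (g : G) {A B E Y : Set X} {x y : X}

lemma smul_connectedComponentIn_compl (hx : x ∉ E) :
    g • connectedComponentIn Eᶜ x = connectedComponentIn (g • E)ᶜ (g • x) := by
  rw [← smul_set_compl]
  exact (Homeomorph.smul g).image_connectedComponentIn hx

lemma connectedComponentIn_compl_smul_ne (hx : x ∉ E) (hy : y ∉ E)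
    (h : connectedComponentIn Eᶜ x ≠ connectedComponentIn Eᶜ y) :
    connectedComponentIn (g • E)ᶜ (g • x) ≠ connectedComponentIn (g • E)ᶜ (g • y) := by
  rw [← smul_connectedComponentIn_compl g hx, ← smul_connectedComponentIn_compl g hy]
  exact (MulAction.injective g).ne h

lemma SepPts.smul (h : SepPts E x y) : SepPts (g • E) (g • x) (g • y) :=
  ⟨smul_mem_smul_set_iff.not.2 h.1, smul_mem_smul_set_iff.not.2 h.2.1,
    connectedComponentIn_compl_smul_ne g h.1 h.2.1 h.2.2⟩

lemma SepSet.smul (h : SepSet E Y) : SepSet (g • E) (g • Y) := by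
  obtain ⟨hYE, x, hx, y, hy, hxy⟩ := h
  exact ⟨(smul_set_mono hYE).trans_eq smul_set_compl, g • x, smul_mem_smul_set hx, g • y,
    smul_mem_smul_set hy, connectedComponentIn_compl_smul_ne g (hYE hx) (hYE hy) hxy⟩

lemma Crosses.smul (h : Crosses A B) : Crosses (g • A) (g • B) :=
  h.imp (fun hAB ↦ (hAB.smul_set (a := g)).mono smul_set_inter.subset)
    fun hAB ↦ ⟨hAB.1.smul g, hAB.2.smul g⟩

end Equivariance

lemma ConvGroupOn.hasConvSubseq_of_not_tendsto_cofinite [TopologicalSpace X]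
    [ContinuousConstSMul G X] {A : Set X} (hA : ConvGroupOn (stab G A) (univ : Set X))
    {g : ℕ → G} (hg : Function.Injective g) (h : ¬ Tendsto (fun i ↦ g i • A) atTop cofinite) :
    HasConvSubseq fun i (x : X) ↦ g i • x := by
  obtain ⟨B, hB⟩ : ∃ B, ∃ᶠ i in atTop, g i • A = B := by
    simpa only [Tendsto, le_cofinite_iff_eventually_ne, eventually_map, not_forall,
      not_eventually, not_not] using h
  obtain ⟨φ, hφ, hφB⟩ := extraction_of_frequently_atTop hB
  have hmem : ∀ i, ((g (φ 0))⁻¹ * g (φ i)) • A = A := fun i ↦ by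
    rw [mul_smul, hφB i, ← hφB 0, inv_smul_smul]
  have hsub : HasConvSubseq fun i (x : X) ↦ ((g (φ 0))⁻¹ * g (φ i)) • x :=
    hA _ hmem ((mul_right_injective _).comp (hg.comp hφ.injective))
  have hcoset := hsub.continuous_comp (continuous_const_smul (g (φ 0)))
  simp only [Function.comp_def, smul_smul, mul_inv_cancel_left] at hcoset
  exact hcoset.of_comp hφ

variable [MetricSpace X] [CompactSpace X] [LocallyConnectedSpace X] [ContinuousConstSMul G X]
  {ι : Type*} {l : Filter ι} {𝓐 : Set (Set X)} {p : X}

lemma CrossConnected.tendsto_smul_smallSets (h𝓐 : CrossConnected 𝓐) (hp : IsPreconnected {p}ᶜ)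
    {g : ι → G} (hdiam : ∀ A ∈ 𝓐, Tendsto (fun i ↦ Metric.diam (g i • A)) l (𝓝 0))
    {A₀ : Set X} (hA₀ : A₀ ∈ 𝓐) (h : Tendsto (fun i ↦ g i • A₀) l (𝓝 p).smallSets) :
    ∀ A ∈ 𝓐, Tendsto (fun i ↦ g i • A) l (𝓝 p).smallSets := by
  intro A hA
  refine (h𝓐 A₀ hA₀ A hA).induction (P := fun C ↦ Tendsto (fun i ↦ g i • C) l (𝓝 p).smallSets)
    h fun C _ D hD hCD hC ↦ ?_
  refine tendsto_smallSets_nhds_of_tendsto_diam (fun i ↦ Metric.isBounded_of_compactSpace)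
    (hdiam D hD) fun U hU ↦ ?_
  filter_upwards [hC.eventually (eventually_smallSets_inter_nonempty_of_crosses hp hU)] with i hi
  exact hi _ (hCD.smul (g i))

lemma CrossConnected.exists_subseq_tendsto_smul_smallSets [Nonempty X] (h𝓐 : CrossConnected 𝓐)
    (hcut : ∀ x : X, IsPreconnected {x}ᶜ) {g : ℕ → G}
    (hdiam : ∀ A ∈ 𝓐, Tendsto (fun i ↦ Metric.diam (g i • A)) atTop (𝓝 0)) :
    ∃ φ : ℕ → ℕ, StrictMono φ ∧ ∃ p : X, ∀ A ∈ 𝓐,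
      Tendsto (fun i ↦ g (φ i) • A) atTop (𝓝 p).smallSets := by
  by_cases hne : ∃ A ∈ 𝓐, A.Nonempty
  · obtain ⟨A₀, hA₀, a, ha⟩ := hne
    obtain ⟨p, φ, hφ, hp⟩ := CompactSpace.tendsto_subseq fun i ↦ g i • a
    have hdiam' : ∀ A ∈ 𝓐, Tendsto (fun i ↦ Metric.diam (g (φ i) • A)) atTop (𝓝 0) :=
      fun A hA ↦ (hdiam A hA).comp hφ.tendsto_atTop
    refine ⟨φ, hφ, p, h𝓐.tendsto_smul_smallSets (hcut p) hdiam' hA₀ ?_⟩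
    refine tendsto_smallSets_nhds_of_tendsto_diam (fun i ↦ Metric.isBounded_of_compactSpace)
      (hdiam' A₀ hA₀) fun U hU ↦ ?_
    filter_upwards [hp hU] with i hi using ⟨_, smul_mem_smul_set ha, hi⟩
  · push Not at hne
    refine ⟨id, strictMono_id, Classical.arbitrary X, fun A hA ↦ tendsto_smallSets_iff.2 ?_⟩
    simp [hne A hA]

lemma FineFam.collapsesPairs (hfine : FineFam 𝓐) (hclosed : ∀ A ∈ 𝓐, IsClosed A)
    (hp : IsPreconnected {p}ᶜ) {g : ι → G}
    (h : ∀ A ∈ 𝓐, Tendsto (fun i ↦ g i • A) l (𝓝 p).smallSets) :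
    CollapsesPairs (fun i (x : X) ↦ g i • x) l p := by
  intro x y hxy W hW
  obtain ⟨𝓑, h𝓑, hfin, hsep⟩ := hfine x y hxy
  have hlim : Tendsto (fun i ↦ g i • ⋃₀ 𝓑) l (𝓝 p).smallSets := by
    refine tendsto_smallSets_iff.2 fun V hV ↦ ?_
    filter_upwards [hfin.eventually_all.2 fun B hB ↦
      tendsto_smallSets_iff.1 (h B (h𝓑 hB)) V hV] with i hi
    simpa only [smul_set_subset_iff_subset_inv_smul_set, sUnion_subset_iff] using hi
  have hopen : IsOpen (⋃₀ 𝓑)ᶜ := by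
    rw [sUnion_eq_biUnion]
    exact (hfin.isClosed_biUnion fun B hB ↦ hclosed B (h𝓑 hB)).isOpen_compl
  have hmem : ∀ {z}, z ∉ ⋃₀ 𝓑 → connectedComponentIn (⋃₀ 𝓑)ᶜ z ∈ 𝓝 z := fun hz ↦
    hopen.connectedComponentIn.mem_nhds (mem_connectedComponentIn hz)
  filter_upwards [prod_mem_prod
    (hlim.eventually (eventually_smallSets_connectedComponentIn_subset hp hW))
    (prod_mem_prod (hmem hsep.1) (hmem hsep.2.1))] with ⟨i, x', y'⟩ ⟨hi, hx', hy'⟩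
  specialize hi _ _ (hsep.smul (g i))
  rw [← smul_connectedComponentIn_compl _ hsep.1,
    ← smul_connectedComponentIn_compl _ hsep.2.1] at hi
  exact hi.imp (· (smul_mem_smul_set hx')) (· (smul_mem_smul_set hy'))

end Actions

/-- Theorem (Swenson, main result of [SWE2]): if `(G, 𝓐)` is a fine pairing on a Peano
continuum `X` without cut points and each stabilizer acts as a convergence group on `X`,
then `G` acts as a convergence group on `X`. -/
theorem fine_pairing_convergence {G X : Type*} [Group G] [MulAction G X]
    [MetricSpace X] [CompactSpace X] [ConnectedSpace X] [LocallyConnectedSpace X]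
    [ContinuousConstSMul G X]
    (hcut : ∀ x : X, IsPreconnected ({x}ᶜ : Set X))
    (𝓐 : Set (Set X))
    (hclosed : ∀ A ∈ 𝓐, IsClosed A)
    (hinv : ∀ g : G, ∀ A ∈ 𝓐, g • A ∈ 𝓐)
    (hcross : CrossConnected 𝓐)
    (hnull : NullFam 𝓐) (hfine : FineFam 𝓐)
    (hstab : ∀ A ∈ 𝓐, ConvGroupOn (stab G A) (Set.univ : Set X)) :
    ConvGroupOn (Set.univ : Set G) (Set.univ : Set X) := by
  intro g _ hg
  change HasConvSubseq fun i (x : X) ↦ g i • x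
  by_cases h : ∀ A ∈ 𝓐, Tendsto (fun i ↦ g i • A) atTop cofinite
  · have hdiam : ∀ A ∈ 𝓐, Tendsto (fun i ↦ Metric.diam (g i • A)) atTop (𝓝 0) := fun A hA ↦
      hnull.tendsto_diam (fun i ↦ hinv (g i) A hA) (h A hA)
    obtain ⟨φ, hφ, p, hp⟩ := hcross.exists_subseq_tendsto_smul_smallSets hcut hdiam
    have hcollapse := hfine.collapsesPairs hclosed (hcut p) hp
    exact hcollapse.hasConvSubseq.of_comp hφ
  · push Not at h
    obtain ⟨A, hA, hfreq⟩ := h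
    exact (hstab A hA).hasConvSubseq_of_not_tendsto_cofinite hg hfreq
end

section
/- Let (G, 𝓐) be a local convergence pairing on a Peano continuum X without cut points, and let 𝓑 ⊆ 𝓐 be finite and cross-connected. If (g_i) is a sequence of elements of G, then either the sequence of sets (g_i(∪𝓑)) is null (i.e., diam(g_i(∪𝓑)) → 0), or there exist B ∈ 𝓑, A ∈ 𝓐 and a subsequence (g_{i_n}) of (g_i) with g_{i_n}(B) = A for all n. -/
/-!
If no `B ∈ 𝓑` is carried to one fixed set along a subsequence, then each set occurs only finitely
often among the `g i • B`, so nullity of `𝓐` forces `diam (g i • B) → 0` for every `B ∈ 𝓑`. It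
remains to see that the small sets `g i • B` and `g i • C` are close together. Along a crossing
sequence it is enough to treat crossing `B` and `C`. If they meet this is clear. Otherwise `B`
separates `C`; by uniform local connectedness the small set `g i • C` lies in a small connected
set `U`, and `U` must meet `g i • B`, since otherwise `(g i)⁻¹ • U` would be a connected subset
of `Bᶜ` containing `C`.
-/

open Set Filter Topology Pointwise

open scoped Uniformity

section Separation

variable {X : Type*} [TopologicalSpace X] {A B U : Set X}

lemma SepSet.inter_nonempty_of_isPreconnected (h : SepSet A B) (hU : IsPreconnected U)
    (hBU : B ⊆ U) : (A ∩ U).Nonempty := by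
  obtain ⟨-, x, hx, y, hy, hne⟩ := h
  by_contra hAU
  have hUA : U ⊆ Aᶜ := (disjoint_iff_inter_eq_empty.2
    (not_nonempty_iff_eq_empty.1 hAU)).subset_compl_left
  exact hne (connectedComponentIn_eq
    (hU.subset_connectedComponentIn (hBU hx) hUA (hBU hy)))

lemma Crosses.left_nonempty (h : Crosses A B) : A.Nonempty := by
  rcases h with h | ⟨-, -, x, hx, -⟩
  · exact h.left
  · exact ⟨x, hx⟩

end Separation

lemma exists_mem_uniformity_ball_subset_isPreconnected {X : Type*} [UniformSpace X]
    [CompactSpace X] [LocallyConnectedSpace X] {V : SetRel X X} (hV : V ∈ 𝓤 X) :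
    ∃ W ∈ 𝓤 X, ∀ x, ∃ U : Set X, IsPreconnected U ∧ UniformSpace.ball x W ⊆ U ∧ U ×ˢ U ⊆ V := by
  have hsmall : ∀ x : X, ∃ U ∈ 𝓝 x, IsPreconnected U ∧ U ×ˢ U ⊆ V := by
    intro x
    have hVx : V ∈ 𝓝 x ×ˢ 𝓝 x := nhds_prod_eq (x := x) (y := x) ▸ nhds_le_uniformity x hV
    obtain ⟨N, hN, hNV⟩ := mem_prod_same_iff.1 hVx
    obtain ⟨U, hU, hUconn, hUN⟩ := locallyConnectedSpace_iff_connected_subsets.1 ‹_› x N hN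
    exact ⟨U, hU, hUconn, (prod_mono hUN hUN).trans hNV⟩
  choose U hU hUconn hUV using hsmall
  obtain ⟨W, hW, hWU⟩ := lebesgue_number_lemma_nhds isCompact_univ fun x _ ↦ hU x
  refine ⟨W, hW, fun x ↦ ?_⟩
  obtain ⟨z, hz⟩ := hWU x (mem_univ x)
  exact ⟨U z, hUconn z, hz, hUV z⟩

/-- The images of `B` and `C` under `f i` become uniformly close along `l`. For `B = C` this says
that the images of `B` shrink, with no reference to a diameter, so that a single notion covers
both the size and the relative position of the images. -/
def ImagesMerge {ι α X : Type*} [UniformSpace X] (l : Filter ι) (f : ι → α → X)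
    (B C : Set α) : Prop :=
  ∀ V ∈ 𝓤 X, ∀ᶠ i in l, ∀ x ∈ B, ∀ y ∈ C, (f i x, f i y) ∈ V

namespace ImagesMerge

variable {ι : Type*} {l : Filter ι}

section Uniform

variable {α X : Type*} [UniformSpace X] {f : ι → α → X} {B C D B' C' : Set α}

lemma mono (h : ImagesMerge l f B C) (hB : B' ⊆ B) (hC : C' ⊆ C) : ImagesMerge l f B' C' :=
  fun V hV ↦ (h V hV).mono fun _ hi x hx y hy ↦ hi x (hB hx) y (hC hy)

lemma trans (hBC : ImagesMerge l f B C) (hCD : ImagesMerge l f C D) (hC : C.Nonempty) :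
    ImagesMerge l f B D := by
  intro V hV
  obtain ⟨c, hc⟩ := hC
  obtain ⟨W, hW, hWV⟩ := comp_mem_uniformity_sets hV
  filter_upwards [hBC W hW, hCD W hW] with i hi hi' x hx y hy
  exact hWV ⟨f i c, hi x hx c hc, hi' c hc y hy⟩

lemma of_inter_nonempty (hB : ImagesMerge l f B B) (hC : ImagesMerge l f C C)
    (hBC : (B ∩ C).Nonempty) : ImagesMerge l f B C :=
  (hB.mono subset_rfl inter_subset_left).trans (hC.mono inter_subset_right subset_rfl) hBC

lemma sUnion {𝓑 𝓒 : Set (Set α)} (h𝓑 : 𝓑.Finite) (h𝓒 : 𝓒.Finite)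
    (h : ∀ B ∈ 𝓑, ∀ C ∈ 𝓒, ImagesMerge l f B C) : ImagesMerge l f (⋃₀ 𝓑) (⋃₀ 𝓒) := by
  intro V hV
  have hall : ∀ᶠ i in l, ∀ B ∈ 𝓑, ∀ C ∈ 𝓒, ∀ x ∈ B, ∀ y ∈ C, (f i x, f i y) ∈ V :=
    h𝓑.eventually_all.2 fun B hB ↦ h𝓒.eventually_all.2 fun C hC ↦ h B hB C hC V hV
  filter_upwards [hall] with i hi
  rintro x ⟨B, hB, hx⟩ y ⟨C, hC, hy⟩
  exact hi B hB C hC x hx y hy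

end Uniform

section Homeomorph

variable {Y X : Type*} [TopologicalSpace Y] [UniformSpace X] [CompactSpace X]
  [LocallyConnectedSpace X] {f : ι → Y ≃ₜ X} {B C : Set Y} {𝓑 : Set (Set Y)}

lemma of_sepSet (hB : ImagesMerge l (fun i ↦ f i) B B) (hC : ImagesMerge l (fun i ↦ f i) C C)
    (hBC : SepSet B C) : ImagesMerge l (fun i ↦ f i) B C := by
  intro V hV
  obtain ⟨V', hV', hV'V⟩ := comp_mem_uniformity_sets hV
  obtain ⟨W, hW, hball⟩ := exists_mem_uniformity_ball_subset_isPreconnected hV'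
  filter_upwards [hB V' hV', hC W hW] with i hBi hCi x hx y hy
  obtain ⟨U, hU, hWU, hUV'⟩ := hball (f i y)
  have hCU : C ⊆ f i ⁻¹' U := fun z hz ↦ hWU (hCi y hy z hz)
  obtain ⟨b, hb, hbU⟩ :=
    hBC.inter_nonempty_of_isPreconnected ((f i).isPreconnected_preimage.2 hU) hCU
  exact hV'V ⟨f i b, hBi x hx b hb, hUV' ⟨hbU, hCU hy⟩⟩

lemma of_crosses (hB : ImagesMerge l (fun i ↦ f i) B B) (hC : ImagesMerge l (fun i ↦ f i) C C)
    (hBC : Crosses B C) : ImagesMerge l (fun i ↦ f i) B C :=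
  hBC.elim (hB.of_inter_nonempty hC) fun hsep ↦ hB.of_sepSet hC hsep.1

lemma of_crossSeqFromTo (hself : ∀ B ∈ 𝓑, ImagesMerge l (fun i ↦ f i) B B)
    (hBC : CrossSeqFromTo 𝓑 B C) : ImagesMerge l (fun i ↦ f i) B C := by
  obtain ⟨n, c, rfl, rfl, hmem, hcross⟩ := hBC
  have hmerge : ∀ j ≤ n, ImagesMerge l (fun i ↦ f i) (c 0) (c j) := by
    intro j hj
    induction j with
    | zero => exact hself _ (hmem 0 hj)
    | succ j ih =>
      have hjn : j ≤ n := Nat.le_of_succ_le hj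
      have hstep : ImagesMerge l (fun i ↦ f i) (c j) (c (j + 1)) :=
        (hself _ (hmem j hjn)).of_crosses (hself _ (hmem _ hj)) (hcross j hj)
      exact (ih hjn).trans hstep (hcross j hj).left_nonempty
  exact hmerge n le_rfl

end Homeomorph

section PseudoMetric

variable {α X : Type*} [PseudoMetricSpace X] {f : ι → α → X} {B : Set α}

lemma self_of_nullFam [BoundedSpace X] {𝓐 : Set (Set X)} (hnull : NullFam 𝓐)
    (hmem : ∀ i, f i '' B ∈ 𝓐) (hne : ∀ A ∈ 𝓐, ∀ᶠ i in l, f i '' B ≠ A) :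
    ImagesMerge l f B B := by
  intro V hV
  obtain ⟨ε, hε, hεV⟩ := Metric.mem_uniformity_dist.1 hV
  have havoid : ∀ᶠ i in l, ∀ A ∈ {A ∈ 𝓐 | ε / 2 < Metric.diam A}, f i '' B ≠ A :=
    (hnull _ (half_pos hε)).eventually_all.2 fun A hA ↦ hne A hA.1
  filter_upwards [havoid] with i hi x hx y hy
  have hdiam : Metric.diam (f i '' B) ≤ ε / 2 := not_lt.1 fun hlt ↦ hi _ ⟨hmem i, hlt⟩ rfl
  refine hεV ?_
  calc dist (f i x) (f i y) ≤ Metric.diam (f i '' B) :=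
        Metric.dist_le_diam_of_mem (Bornology.IsBounded.all _) (mem_image_of_mem _ hx)
          (mem_image_of_mem _ hy)
    _ ≤ ε / 2 := hdiam
    _ < ε := half_lt_self hε

lemma tendsto_diam (h : ImagesMerge l f B B) :
    Tendsto (fun i ↦ Metric.diam (f i '' B)) l (𝓝 0) := by
  rw [Metric.nhds_basis_closedBall.tendsto_right_iff]
  intro ε hε
  filter_upwards [h _ (Metric.dist_mem_uniformity hε)] with i hi
  rw [Metric.mem_closedBall, Real.dist_0_eq_abs, abs_of_nonneg Metric.diam_nonneg]
  refine Metric.diam_le_of_forall_dist_le hε.le ?_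
  rintro _ ⟨x, hx, rfl⟩ _ ⟨y, hy, rfl⟩
  exact (hi x hx y hy).le

end PseudoMetric

end ImagesMerge

theorem pigeonhole_lemma_general {Y X : Type*} [TopologicalSpace Y] [PseudoMetricSpace X]
    [CompactSpace X] [LocallyConnectedSpace X] {𝓐 : Set (Set X)} {𝓑 : Set (Set Y)}
    (hnull : NullFam 𝓐) (hfin : 𝓑.Finite) (hcc : CrossConnected 𝓑)
    (f : ℕ → Y ≃ₜ X) (hf : ∀ i, ∀ B ∈ 𝓑, f i '' B ∈ 𝓐) :
    Tendsto (fun i ↦ Metric.diam (f i '' ⋃₀ 𝓑)) atTop (𝓝 0) ∨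
      ∃ B ∈ 𝓑, ∃ A ∈ 𝓐, ∃ k : ℕ → ℕ, StrictMono k ∧ ∀ m, f (k m) '' B = A := by
  by_cases hrec : ∃ B ∈ 𝓑, ∃ A ∈ 𝓐, ∃ᶠ i in atTop, f i '' B = A
  · obtain ⟨B, hB, A, hA, hfreq⟩ := hrec
    exact Or.inr ⟨B, hB, A, hA, extraction_of_frequently_atTop hfreq⟩
  left
  have hself : ∀ B ∈ 𝓑, ImagesMerge atTop (fun i ↦ f i) B B := fun B hB ↦
    .self_of_nullFam hnull (hf · B hB) fun A hA ↦
      not_frequently.1 fun hfreq ↦ hrec ⟨B, hB, A, hA, hfreq⟩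
  have hpair : ∀ B ∈ 𝓑, ∀ C ∈ 𝓑, ImagesMerge atTop (fun i ↦ f i) B C := fun B hB C hC ↦
    .of_crossSeqFromTo hself (hcc B hB C hC)
  exact (ImagesMerge.sUnion hfin hfin hpair).tendsto_diam

/-- Pigeonhole lemma: for a finite cross-connected `𝓑 ⊆ 𝓐`, either the images
`g_i(⋃𝓑)` form a null sequence, or some `B ∈ 𝓑` is mapped to a fixed `A ∈ 𝓐`
along a subsequence. -/
theorem pigeonhole_lemma {G X : Type*} [Group G] [MulAction G X]
    [MetricSpace X] [CompactSpace X] [ConnectedSpace X] [LocallyConnectedSpace X]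
    [ContinuousConstSMul G X]
    (hcut : ∀ x : X, IsPreconnected ({x}ᶜ : Set X))
    (𝓐 𝓑 : Set (Set X)) (h : IsLocalConvPairing G 𝓐)
    (h𝓑 : 𝓑 ⊆ 𝓐) (hfin : 𝓑.Finite) (hcc : CrossConnected 𝓑)
    (g : ℕ → G) :
    Tendsto (fun i => Metric.diam (g i • ⋃₀ 𝓑)) atTop (𝓝 0) ∨
      ∃ B ∈ 𝓑, ∃ A ∈ 𝓐, ∃ k : ℕ → ℕ, StrictMono k ∧ ∀ m : ℕ, g (k m) • B = A :=
  pigeonhole_lemma_general h.null hfin hcc (fun i ↦ Homeomorph.smul (g i))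
    fun i B hB ↦ h.invariant (g i) B (h𝓑 hB)
end

section
/- Let Y be a Peano continuum without cut points. For any point x ∈ Y and any ε > 0, there is a δ > 0 such that Y \ B(x, ε) is contained in a single connected component of Y \ B(x, δ), where B(x, r) denotes the open metric ball of radius r about x. -/
/-!
Let `K` be a compact set missing `x`, such as the complement of `B(x, ε)`. As `x` is not a cut
point, `{x}ᶜ` is preconnected, and it is the directed union of the exteriors of the closed
neighborhoods of `x`. In a locally connected space, the component of a point in a directed union of
open sets is the union of its components in the members, since that union is open and relatively
closed. So `K` is covered by a directed family of open sets, each of them a component of one of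
these exteriors, and by compactness `K` lies in a single one.
-/

open Set Filter Topology Pointwise

section DirectedUnion

variable {X ι : Type*} [TopologicalSpace X] [LocallyConnectedSpace X] {U : ι → Set X}

theorem closure_iUnion_connectedComponentIn_inter_subset (hU : ∀ i, IsOpen (U i))
    (hdir : Directed (· ⊆ ·) U) (c : X) :
    closure (⋃ i, connectedComponentIn (U i) c) ∩ ⋃ i, U i ⊆
      ⋃ i, connectedComponentIn (U i) c := by
  rintro y ⟨hy_closure, hy⟩
  obtain ⟨i, hyi⟩ := mem_iUnion.1 hy
  obtain ⟨z, hzy, hz⟩ := mem_closure_iff.1 hy_closure _ (hU i).connectedComponentIn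
    (mem_connectedComponentIn hyi)
  obtain ⟨j, hzc⟩ := mem_iUnion.1 hz
  obtain ⟨k, hik, hjk⟩ := hdir i j
  have component_eq : connectedComponentIn (U k) c = connectedComponentIn (U k) y :=
    (connectedComponentIn_eq (connectedComponentIn_mono c hjk hzc)).trans
      (connectedComponentIn_eq (connectedComponentIn_mono y hik hzy)).symm
  exact mem_iUnion.2 ⟨k, component_eq ▸ mem_connectedComponentIn (hik hyi)⟩

theorem iUnion_connectedComponentIn_of_directed (hU : ∀ i, IsOpen (U i))
    (hdir : Directed (· ⊆ ·) U) (c : X) :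
    ⋃ i, connectedComponentIn (U i) c = connectedComponentIn (⋃ i, U i) c := by
  refine Subset.antisymm
    (iUnion_subset fun i => connectedComponentIn_mono c (subset_iUnion U i)) ?_
  by_cases hc : c ∈ ⋃ i, U i
  · obtain ⟨i, hci⟩ := mem_iUnion.1 hc
    exact isPreconnected_connectedComponentIn.subset_of_closure_inter_subset
      (isOpen_iUnion fun j => (hU j).connectedComponentIn)
      ⟨c, mem_connectedComponentIn hc, mem_iUnion.2 ⟨i, mem_connectedComponentIn hci⟩⟩
      ((inter_subset_inter_right _ (connectedComponentIn_subset _ c)).trans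
        (closure_iUnion_connectedComponentIn_inter_subset hU hdir c))
  · simp only [connectedComponentIn_eq_empty hc, empty_subset]

theorem exists_subset_connectedComponentIn_of_directed [Nonempty ι] {K : Set X} {c : X}
    (hK : IsCompact K) (hU : ∀ i, IsOpen (U i)) (hdir : Directed (· ⊆ ·) U)
    (hKc : K ⊆ connectedComponentIn (⋃ i, U i) c) :
    ∃ i, K ⊆ connectedComponentIn (U i) c :=
  hK.elim_directed_cover _ (fun i => (hU i).connectedComponentIn)
    (hKc.trans_eq (iUnion_connectedComponentIn_of_directed hU hdir c).symm)
    (hdir.mono_comp (· ⊆ ·) (g := (connectedComponentIn · c)) fun _ _ =>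
      connectedComponentIn_mono c)

end DirectedUnion

section ClosedNhds

variable {X : Type*} [TopologicalSpace X]

theorem directed_compl_isClosed_nhds (x : X) :
    Directed (· ⊆ ·) fun N : {N : Set X // N ∈ 𝓝 x ∧ IsClosed N} => (N : Set X)ᶜ :=
  fun M N => ⟨⟨M ∩ N, inter_mem M.2.1 N.2.1, M.2.2.inter N.2.2⟩,
    compl_subset_compl.2 inter_subset_left, compl_subset_compl.2 inter_subset_right⟩

theorem iUnion_compl_isClosed_nhds [T2Space X] (x : X) :
    ⋃ N : {N : Set X // N ∈ 𝓝 x ∧ IsClosed N}, (N : Set X)ᶜ = {x}ᶜ := by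
  ext y
  simp only [mem_iUnion, mem_compl_iff, mem_singleton_iff]
  refine ⟨?_, fun hyx => ?_⟩
  · rintro ⟨N, hyN⟩ rfl
    exact hyN (mem_of_mem_nhds N.2.1)
  · obtain ⟨V, W, hV, hW, hyV, hxW, hVW⟩ := t2_separation hyx
    exact ⟨⟨Vᶜ, mem_of_superset (hW.mem_nhds hxW) hVW.subset_compl_left, hV.isClosed_compl⟩,
      not_not_intro hyV⟩

end ClosedNhds

theorem complement_ball_in_single_component_general {X ι : Type*} [TopologicalSpace X] [T2Space X]
    [LocallyConnectedSpace X] {x : X} {p : ι → Prop} {B : ι → Set X} {K : Set X}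
    (hB : (𝓝 x).HasBasis p B) (hx : IsPreconnected ({x}ᶜ : Set X)) (hK : IsCompact K)
    (hxK : x ∉ K) :
    ∃ i, p i ∧ ∃ c, K ⊆ connectedComponentIn (B i)ᶜ c := by
  obtain ⟨c, hKc⟩ : ∃ c, K ⊆ connectedComponentIn {x}ᶜ c := by
    obtain rfl | ⟨c, hc⟩ := K.eq_empty_or_nonempty
    · exact ⟨x, empty_subset _⟩
    · have hK_compl : K ⊆ {x}ᶜ := subset_compl_singleton_iff.2 hxK
      exact ⟨c, hK_compl.trans (hx.subset_connectedComponentIn (hK_compl hc) Subset.rfl)⟩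
  have : Nonempty {N : Set X // N ∈ 𝓝 x ∧ IsClosed N} := ⟨⟨univ, univ_mem, isClosed_univ⟩⟩
  obtain ⟨N, hKN⟩ := exists_subset_connectedComponentIn_of_directed hK
    (fun N => N.2.2.isOpen_compl) (directed_compl_isClosed_nhds x)
    (hKc.trans_eq (by rw [iUnion_compl_isClosed_nhds]))
  obtain ⟨i, hi, hBN⟩ := hB.mem_iff.1 N.2.1
  exact ⟨i, hi, c, hKN.trans (connectedComponentIn_mono c (compl_subset_compl.2 hBN))⟩

/-- In a Peano continuum without cut points, for every `x` and `ε > 0` there is `δ > 0`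
such that the complement of `B(x, ε)` lies in a single component of the complement of
`B(x, δ)`. -/
theorem complement_ball_in_single_component {Y : Type*} [MetricSpace Y] [CompactSpace Y]
    [ConnectedSpace Y] [LocallyConnectedSpace Y]
    (hcut : ∀ y : Y, IsPreconnected ({y}ᶜ : Set Y))
    (x : Y) (ε : ℝ) (hε : 0 < ε) :
    ∃ δ : ℝ, 0 < δ ∧ ∃ c : Y,
      (Metric.ball x ε)ᶜ ⊆ connectedComponentIn (Metric.ball x δ)ᶜ c :=
  complement_ball_in_single_component_general Metric.nhds_basis_ball (hcut x)
    Metric.isOpen_ball.isClosed_compl.isCompact (not_not_intro (Metric.mem_ball_self hε))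
end
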